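/- arXiv:math/0208161 — 5 statements merged into one kernel-verified Lean document; each statement's English description precedes it below -/
import Mathlib

section
/- Restriction to {0, 1, …, g} is a bijection from the set of final sequences of length 2g onto the set of elementary sequences of length g; in other words, every elementary sequence φ of length g extends uniquely to a final sequence ψ of length 2g with ψ(i) = φ(i) for all 0 ≤ i ≤ g (the extension is given by ψ(2g − i) = φ(i) + g − i for 0 ≤ i ≤ g). -/
/-- An *elementary sequence* of length `g`: `φ 0 = 0` and
`φ (i-1) ≤ φ i ≤ φ (i-1) + 1` for all `1 ≤ i ≤ g`.
(Only the values `φ 0, …, φ g` are relevant.) -/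
def IsElemSeq (g : ℕ) (φ : ℕ → ℕ) : Prop :=
  φ 0 = 0 ∧ ∀ i, 1 ≤ i → i ≤ g → φ (i - 1) ≤ φ i ∧ φ i ≤ φ (i - 1) + 1

/-- A *final sequence* of length `2g`: `ψ 0 = 0`, `ψ j - ψ (j-1) ∈ {0, 1}` for all
`1 ≤ j ≤ 2g`, and `ψ (2g - i) = ψ i + (g - i)` for all `0 ≤ i ≤ g`.
(Only the values `ψ 0, …, ψ (2g)` are relevant.) -/
def IsFinalSeq (g : ℕ) (ψ : ℕ → ℕ) : Prop :=
  ψ 0 = 0 ∧ (∀ j, 1 ≤ j → j ≤ 2 * g → ψ (j - 1) ≤ ψ j ∧ ψ j ≤ ψ (j - 1) + 1) ∧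
    ∀ i ≤ g, ψ (2 * g - i) = ψ i + (g - i)

/-- Restriction to `{0, 1, …, g}` is a bijection from final sequences of length `2g`
onto elementary sequences of length `g`: the restriction of any final sequence is
elementary, and every elementary sequence `φ` of length `g` extends to a final
sequence `ψ` of length `2g` with `ψ i = φ i` for `0 ≤ i ≤ g`, uniquely determined
on `{0, 1, …, 2g}`; the extension is given by `ψ (2g - i) = φ i + (g - i)` for
`0 ≤ i ≤ g`. -/
theorem finalSeq_restriction_bijective (g : ℕ) (hg : 1 ≤ g) :
    (∀ ψ : ℕ → ℕ, IsFinalSeq g ψ → IsElemSeq g ψ) ∧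
    ∀ φ : ℕ → ℕ, IsElemSeq g φ →
      ∃ ψ : ℕ → ℕ, IsFinalSeq g ψ ∧ (∀ i ≤ g, ψ i = φ i) ∧
        (∀ i ≤ g, ψ (2 * g - i) = φ i + (g - i)) ∧
        ∀ ψ' : ℕ → ℕ, IsFinalSeq g ψ' → (∀ i ≤ g, ψ' i = φ i) →
          ∀ j ≤ 2 * g, ψ' j = ψ j := by
  refine ⟨fun ψ h => ⟨h.1, fun i h1 h2 => h.2.1 i h1 (by omega)⟩, ?_⟩
  rintro φ ⟨h0, hs⟩
  have key : ∀ i ≤ g, (if 2 * g - i ≤ g then φ (2 * g - i)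
      else φ (2 * g - (2 * g - i)) + (2 * g - i - g)) = φ i + (g - i) := by
    intro i hi
    split_ifs with h
    · have e : i = g := by omega
      subst e
      have e2 : 2 * i - i = i := by omega
      rw [e2]; omega
    · have e2 : 2 * g - (2 * g - i) = i := by omega
      rw [e2]; omega
  refine ⟨fun j => if j ≤ g then φ j else φ (2 * g - j) + (j - g),
    ⟨by simp [h0], ?_, ?_⟩, ?_, key, ?_⟩
  · intro j h1 h2
    dsimp only
    by_cases hj : j ≤ g
    · have hj' : j - 1 ≤ g := by omega
      rw [if_pos hj, if_pos hj']
      exact hs j h1 hj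
    · have h := hs (2 * g - j + 1) (by omega) (by omega)
      have e : 2 * g - j + 1 - 1 = 2 * g - j := by omega
      rw [e] at h
      rw [if_neg hj]
      by_cases hj' : j - 1 ≤ g
      · rw [if_pos hj']
        have e2 : 2 * g - j + 1 = j - 1 := by omega
        rw [e2] at h
        omega
      · rw [if_neg hj']
        have e2 : 2 * g - j + 1 = 2 * g - (j - 1) := by omega
        rw [e2] at h
        omega
  · intro i hi
    dsimp only
    rw [key i hi, if_pos hi]
  · intro i hi
    dsimp only
    rw [if_pos hi]
  · intro ψ' h' he j hj
    dsimp only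
    by_cases hjg : j ≤ g
    · rw [if_pos hjg, he j hjg]
    · rw [if_neg hjg]
      have h := h'.2.2 (2 * g - j) (by omega)
      have e : 2 * g - (2 * g - j) = j := by omega
      rw [e, he (2 * g - j) (by omega)] at h
      omega
end

section
/- The smallest collection C of k-subspaces of M that contains 0 and M and is closed under the two operations N ↦ F(N) (image under F) and N ↦ V^{−1}(N) (preimage under V) is finite and totally ordered by inclusion. (The resulting chain 0 = N_0 ⊊ N_1 ⊊ ⋯ ⊊ N_r = M is the canonical filtration of (M, F, V).) -/
open Module

instance frobenius_surjective_inst (p : ℕ) [Fact p.Prime] (k : Type*) [Field k] [CharP k p]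
    [PerfectRing k p] : RingHomSurjective (frobenius k p) :=
  ⟨(frobeniusEquiv k p).surjective⟩

instance frobeniusEquiv_symm_surjective_inst (p : ℕ) [Fact p.Prime] (k : Type*) [Field k]
    [CharP k p] [PerfectRing k p] :
    RingHomSurjective ((frobeniusEquiv k p).symm : k →+* k) :=
  ⟨(frobeniusEquiv k p).symm.surjective⟩

/-- Let `(M, F, V)` be the Dieudonné space of a BT₁ group scheme over a perfect field `k` of
characteristic `p`.  The smallest collection `C` of `k`-subspaces of `M` containing `0` and `M`
and closed under `N ↦ F(N)` (image under `F`) and `N ↦ V⁻¹(N)` (preimage under `V`) is finite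
and totally ordered by inclusion.  (The resulting chain is the canonical filtration of
`(M, F, V)`.) -/
theorem canonical_filtration_finite_chain (p : ℕ) [Fact p.Prime] (k : Type*) [Field k]
    [CharP k p] [PerfectRing k p] (M : Type*) [AddCommGroup M] [Module k M]
    [FiniteDimensional k M]
    (F : M →ₛₗ[frobenius k p] M)
    (V : M →ₛₗ[((frobeniusEquiv k p).symm : k →+* k)] M)
    (hFV : LinearMap.ker F = LinearMap.range V)
    (hVF : LinearMap.ker V = LinearMap.range F)
    (C : Set (Submodule k M))
    (hbot : ⊥ ∈ C) (htop : ⊤ ∈ C)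
    (hmapF : ∀ N ∈ C, N.map F ∈ C)
    (hcomapV : ∀ N ∈ C, N.comap V ∈ C)
    (hmin : ∀ D : Set (Submodule k M), ⊥ ∈ D → ⊤ ∈ D →
      (∀ N ∈ D, N.map F ∈ D) → (∀ N ∈ D, N.comap V ∈ D) → C ⊆ D) :
    C.Finite ∧ IsChain (· ≤ ·) C := by
  have hcase : ∀ N ∈ C, N = ⊥ ∨ N = ⊤ ∨ (∃ A ∈ C, N = A.map F) ∨ (∃ A ∈ C, N = A.comap V) := by
    refine hmin {N | N = ⊥ ∨ N = ⊤ ∨ (∃ A ∈ C, N = A.map F) ∨ (∃ A ∈ C, N = A.comap V)}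
      (Or.inl rfl) (Or.inr (Or.inl rfl)) ?_ ?_
    · rintro N hN
      refine Or.inr (Or.inr (Or.inl ⟨N, ?_, rfl⟩))
      rcases hN with rfl | rfl | ⟨A, hA, rfl⟩ | ⟨A, hA, rfl⟩
      exacts [hbot, htop, hmapF _ hA, hcomapV _ hA]
    · rintro N hN
      refine Or.inr (Or.inr (Or.inr ⟨N, ?_, rfl⟩))
      rcases hN with rfl | rfl | ⟨A, hA, rfl⟩ | ⟨A, hA, rfl⟩
      exacts [hbot, htop, hmapF _ hA, hcomapV _ hA]
  have hle : ∀ A B : Submodule k M, A.map F ≤ B.comap V := by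
    rintro A B _ ⟨x, _, rfl⟩
    have h : F x ∈ LinearMap.ker V := by rw [hVF]; exact ⟨x, rfl⟩
    rw [LinearMap.mem_ker] at h
    rw [Submodule.mem_comap, h]
    exact B.zero_mem
  have hcomp : ∀ N ∈ C, ∀ N' ∈ C, N ≤ N' ∨ N' ≤ N := by
    refine hmin {N | ∀ N' ∈ C, N ≤ N' ∨ N' ≤ N} (fun _ _ => Or.inl bot_le)
      (fun _ _ => Or.inr le_top) ?_ ?_
    · intro N hN N' hN'
      rcases hcase N' hN' with rfl | rfl | ⟨A, hA, rfl⟩ | ⟨A, hA, rfl⟩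
      · exact Or.inr bot_le
      · exact Or.inl le_top
      · exact (hN A hA).imp (fun h => Submodule.map_mono h) (fun h => Submodule.map_mono h)
      · exact Or.inl (hle _ _)
    · intro N hN N' hN'
      rcases hcase N' hN' with rfl | rfl | ⟨A, hA, rfl⟩ | ⟨A, hA, rfl⟩
      · exact Or.inr bot_le
      · exact Or.inl le_top
      · exact Or.inr (hle _ _)
      · exact (hN A hA).imp (fun h => Submodule.comap_mono h) (fun h => Submodule.comap_mono h)
  refine ⟨?_, fun N hN N' hN' _ => hcomp N hN N' hN'⟩
  refine Set.Finite.of_finite_image (f := fun N : Submodule k M => finrank k N)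
    ((Set.finite_Iic (finrank k M)).subset ?_) ?_
  · rintro _ ⟨N, _, rfl⟩
    exact Submodule.finrank_le N
  · intro A hA B hB h
    rcases hcomp A hA B hB with h' | h'
    · exact Submodule.eq_of_le_of_finrank_eq h' h
    · exact (Submodule.eq_of_le_of_finrank_eq h' h.symm).symm
end

section
/- For every k-subspace N ⊆ M one has F(N)^⊥ = V^{−1}(N^⊥). Consequently, the canonical filtration is self-dual: if N belongs to the smallest collection of subspaces of M containing 0 and M and closed under N ↦ F(N) and N ↦ V^{−1}(N), then N^⊥ also belongs to this collection. -/
open Module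

/-- For a bilinear form `B` and a subspace `N ⊆ M`, the orthogonal complement
`N^⊥ = {x ∈ M ∣ B x n = 0 for all n ∈ N}`. -/
def Submodule.perpB {k M : Type*} [Field k] [AddCommGroup M] [Module k M]
    (B : M →ₗ[k] M →ₗ[k] k) (N : Submodule k M) : Submodule k M where
  carrier := {x : M | ∀ n ∈ N, B x n = 0}
  add_mem' := by
    intro a b ha hb n hn
    simp [ha n hn, hb n hn]
  zero_mem' := by
    intro n hn
    simp
  smul_mem' := by
    intro c x hx n hn
    simp [hx n hn]

/-- Let `(M, F, V)` be the Dieudonné space of a principally quasi-polarized BT₁ group scheme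
over a perfect field `k` of characteristic `p`, with nondegenerate alternating form `B` on `M`
(of dimension `2g`) satisfying `B (F x) y = (B x (V y)) ^ p`.  Then for every `k`-subspace
`N ⊆ M` one has `F(N)^⊥ = V⁻¹(N^⊥)`.  Consequently, the canonical filtration is self-dual:
if `N` belongs to the smallest collection of subspaces of `M` containing `0` and `M` and
closed under `N ↦ F(N)` and `N ↦ V⁻¹(N)`, then so does `N^⊥`. -/
theorem perp_map_eq_comap_perp_and_selfdual (p : ℕ) [Fact p.Prime] (k : Type*) [Field k]
    [CharP k p] [PerfectRing k p] (g : ℕ) (M : Type*) [AddCommGroup M] [Module k M]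
    [FiniteDimensional k M] (hdim : finrank k M = 2 * g)
    (F : M →ₛₗ[frobenius k p] M)
    (V : M →ₛₗ[((frobeniusEquiv k p).symm : k →+* k)] M)
    (hFV : LinearMap.ker F = LinearMap.range V)
    (hVF : LinearMap.ker V = LinearMap.range F)
    (B : M →ₗ[k] M →ₗ[k] k)
    (halt : ∀ x, B x x = 0)
    (hnondeg : ∀ x, (∀ y, B x y = 0) → x = 0)
    (hcompat : ∀ x y, B (F x) y = (B x (V y)) ^ p) :
    (∀ N : Submodule k M, (N.map F).perpB B = (N.perpB B).comap V) ∧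
    ∀ C : Set (Submodule k M), ⊥ ∈ C → ⊤ ∈ C →
      (∀ N ∈ C, N.map F ∈ C) → (∀ N ∈ C, N.comap V ∈ C) →
      (∀ D : Set (Submodule k M), ⊥ ∈ D → ⊤ ∈ D →
        (∀ N ∈ D, N.map F ∈ D) → (∀ N ∈ D, N.comap V ∈ D) → C ⊆ D) →
      ∀ N ∈ C, N.perpB B ∈ C := by
  have hB : B.IsAlt := halt
  have hrefl : B.IsRefl := hB.isRefl
  have hcomm : ∀ x y, B x y = 0 ↔ B y x = 0 := fun x y => ⟨hrefl x y, hrefl y x⟩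
  have hp : p ≠ 0 := (Fact.out : p.Prime).ne_zero
  have hnd : LinearMap.BilinForm.Nondegenerate B :=
    ⟨hnondeg, fun x hx => hnondeg x fun y => hrefl _ _ (hx y)⟩
  have horth : ∀ N : Submodule k M, N.perpB B = LinearMap.BilinForm.orthogonal B N := by
    intro N
    ext x
    exact forall₂_congr fun n _ => hcomm x n
  have hpp : ∀ N : Submodule k M, (N.perpB B).perpB B = N := by
    intro N
    rw [horth, horth]
    exact LinearMap.BilinForm.orthogonal_orthogonal hnd hrefl N
  have h1 : ∀ N : Submodule k M, (N.map F).perpB B = (N.perpB B).comap V := by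
    intro N
    ext x
    change (∀ n ∈ N.map F, B x n = 0) ↔ (∀ n ∈ N, B (V x) n = 0)
    constructor
    · intro h n hn
      have h2 := (hcomm _ _).1 (h (F n) (Submodule.mem_map_of_mem hn))
      rw [hcompat] at h2
      exact (hcomm _ _).1 (eq_zero_of_pow_eq_zero h2)
    · rintro h _ ⟨n, hn, rfl⟩
      rw [hcomm, hcompat, (hcomm _ _).1 (h n hn), zero_pow hp]
  refine ⟨h1, ?_⟩
  intro C hbot htop hF hV hmin N hN
  have hbt : (⊥ : Submodule k M).perpB B = ⊤ := by
    rw [eq_top_iff]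
    intro x _ n hn
    rw [(Submodule.mem_bot k).1 hn, map_zero]
  have htb : (⊤ : Submodule k M).perpB B = ⊥ := by rw [← hbt, hpp]
  refine hmin {N | N.perpB B ∈ C} ?_ ?_ ?_ ?_ hN
  · change Submodule.perpB B ⊥ ∈ C
    rwa [hbt]
  · change Submodule.perpB B ⊤ ∈ C
    rwa [htb]
  · intro N hN
    change Submodule.perpB B _ ∈ C
    rw [h1]
    exact hV _ hN
  · intro N hN
    change Submodule.perpB B _ ∈ C
    have h2 := h1 (N.perpB B)
    rw [hpp] at h2
    rw [← h2, hpp]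
    exact hF _ hN
end

section
/- If k is algebraically closed, then there exists a final filtration of (M, F, V): a complete flag 0 = M_0 ⊂ M_1 ⊂ ⋯ ⊂ M_n = M of k-subspaces with dim_k M_j = j (where n = dim_k M) such that for every j there exist indices j′ and j″ with F(M_j) = M_{j′} and V^{−1}(M_j) = M_{j″}. -/
open Module

open Polynomial in
lemma ff_scalar {k : Type*} [Field k] [IsAlgClosed k] (p : ℕ) (hp : 2 ≤ p) (a : ℕ → k) (m : ℕ)
    (ha : ∃ i ≤ m, a i ≠ 0) :
    ∃ x : ℕ → k, x m ≠ 0 ∧ x 0 = (x m) ^ p * a 0 ∧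
      ∀ i, x (i + 1) = x i ^ p + (x m) ^ p * a (i + 1) := by
  classical

  let P : ℕ → k[X] := fun n => Nat.rec (X ^ p * C (a 0)) (fun i q => q ^ p + X ^ p * C (a (i + 1))) n
  have hP0 : P 0 = X ^ p * C (a 0) := rfl
  have hPs : ∀ i, P (i + 1) = P i ^ p + X ^ p * C (a (i + 1)) := fun i => rfl
  have hdiv : ∀ i, X ^ 2 ∣ P i := by
    intro i
    induction i with
    | zero => rw [hP0]; exact Dvd.dvd.mul_right (pow_dvd_pow _ hp) _
    | succ i ih =>
      rw [hPs]
      exact dvd_add (dvd_pow ih (by omega)) (Dvd.dvd.mul_right (pow_dvd_pow _ hp) _)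
  have hz : ∀ i, P i = 0 → ∀ l ≤ i, a l = 0 := by
    intro i
    induction i with
    | zero =>
      intro h l hl
      obtain rfl : l = 0 := by omega
      rw [hP0] at h
      simpa using h
    | succ i ih =>
      intro h l hl
      have h1 : a (i + 1) = 0 := by
        obtain ⟨q, hq⟩ := hdiv i
        rw [hPs, hq] at h
        have h2 : X ^ p * (X ^ p * q ^ p + C (a (i + 1))) = 0 := by
          rw [← h]; ring
        have h3 : X ^ p * q ^ p + C (a (i + 1)) = 0 := by
          rcases mul_eq_zero.mp h2 with h4 | h4
          · exact absurd h4 (pow_ne_zero _ X_ne_zero)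
          · exact h4
        have := congrArg (eval 0) h3
        simpa [show p ≠ 0 by omega] using this
      rcases Nat.lt_or_ge i l with h2 | h2
      · obtain rfl : l = i + 1 := by omega
        exact h1
      · refine ih ?_ l h2
        rw [hPs, h1] at h
        simpa [show p ≠ 0 by omega] using h
  obtain ⟨q, hq⟩ := hdiv m
  have hq0 : q ≠ 0 := by
    rintro rfl
    obtain ⟨i, hi, hai⟩ := ha
    exact hai (hz m (by simpa using hq) i hi)
  obtain ⟨t, ht⟩ : ∃ t, IsRoot (X * q - 1) t := by
    apply IsAlgClosed.exists_root
    intro h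
    have h1 : (X * q).degree = 0 := by
      have : X * q = (X * q - 1) + C 1 := by simp
      have h2 : (X * q).degree ≤ 0 := by
        rw [this]
        exact (degree_add_le _ _).trans (by rw [h]; simp)
      exact le_antisymm h2 (zero_le_degree_iff.mpr (mul_ne_zero X_ne_zero hq0))
    rw [degree_mul, degree_X, degree_eq_natDegree hq0] at h1
    norm_cast at h1
    omega
  have ht1 : t * q.eval t = 1 := by
    have : t * q.eval t - 1 = 0 := by simpa [IsRoot] using ht
    linear_combination this
  have hm : (P m).eval t = t := by
    rw [hq]; simp; linear_combination t * ht1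
  refine ⟨fun i => (P i).eval t, ?_, ?_, ?_⟩
  · show (P m).eval t ≠ 0
    rw [hm]; rintro rfl; simp at ht1
  · show (P 0).eval t = (P m).eval t ^ p * a 0
    rw [hm, hP0]; simp; ring
  · intro i
    show (P (i+1)).eval t = (P i).eval t ^ p + (P m).eval t ^ p * a (i+1)
    rw [hm, hPs]; simp; ring

lemma ff_core {k : Type*} [Field k] [IsAlgClosed k] (p : ℕ) (hp : 2 ≤ p)
    {X : Type*} [AddCommGroup X] [Module k X] [FiniteDimensional k X] (A B : Submodule k X)
    (R : X → X → Prop)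
    (hadd : ∀ x y x' y', R x y → R x' y' → R (x + x') (y + y'))
    (hsmul : ∀ (a : k) x y, R x y → R (a • x) (a ^ p • y))
    (hA : ∀ y ∈ A, R 0 y)
    (hex : ∀ x ∈ B, ∃ y ∈ B, R x y)
    (hinj : ∀ x y, R x y → x ∈ B → y ∈ A → x ∈ A)
    (hBA : ∃ x ∈ B, x ∉ A) : ∃ v ∈ B, v ∉ A ∧ R v v := by
  classical
  obtain ⟨w0, hw0B, hw0A⟩ := hBA
  choose! φ hφB hφR using hex
  let w : ℕ → X := fun n => φ^[n] w0
  have hws : ∀ i, w (i + 1) = φ (w i) := fun i => Function.iterate_succ_apply' _ _ _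
  have hwB : ∀ i, w i ∈ B := by
    intro i
    induction i with
    | zero => exact hw0B
    | succ i ih => rw [hws]; exact hφB _ ih
  have hwR : ∀ i, R (w i) (w (i + 1)) := fun i => by rw [hws]; exact hφR _ (hwB i)
  have hwA : ∀ i, w i ∉ A := by
    intro i
    induction i with
    | zero => exact hw0A
    | succ i ih => exact fun h => ih (hinj _ _ (hwR i) (hwB i) h)
  let S : ℕ → Submodule k X := fun n => Nat.rec A (fun i q => q ⊔ Submodule.span k {w i}) n
  have hS0 : S 0 = A := rfl
  have hSs : ∀ i, S (i + 1) = S i ⊔ Submodule.span k {w i} := fun i => rfl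
  have hSmono : Monotone S := monotone_nat_of_le_succ fun i => by rw [hSs]; exact le_sup_left
  have hSmem : ∀ i y, y ∈ S i → ∃ a : ℕ → k, y - ∑ l ∈ Finset.range i, a l • w l ∈ A := by
    intro i
    induction i with
    | zero => intro y hy; exact ⟨0, by simpa using (show y ∈ A from hy)⟩
    | succ i ih =>
      intro y hy
      rw [hSs] at hy
      obtain ⟨z, hz, u, hu, rfl⟩ := Submodule.mem_sup.mp hy
      obtain ⟨b, rfl⟩ := Submodule.mem_span_singleton.mp hu
      obtain ⟨a, ha⟩ := ih z hz
      refine ⟨fun l => if l = i then b else a l, ?_⟩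
      rw [Finset.sum_range_succ, Finset.sum_congr rfl (g := fun l => a l • w l)]
      · simpa using ha
      · intro l hl
        simp [(Finset.mem_range.mp hl).ne]
  have hwS : ∀ l i, l < i → w l ∈ S i := fun l i h =>
    hSmono (show l + 1 ≤ i from h) (by
      rw [hSs]; exact Submodule.mem_sup_right (Submodule.mem_span_singleton_self _))
  have hfind : ∃ r, w r ∈ S r := by
    obtain ⟨n, hn⟩ := WellFoundedGT.monotone_chain_condition ⟨S, hSmono⟩
    refine ⟨n, ?_⟩
    have h1 : S n = S (n + 1) := hn (n + 1) (by omega)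
    rw [h1]; exact hwS n (n + 1) (by omega)
  have hr := Nat.find_spec hfind
  have hmin : ∀ m < Nat.find hfind, w m ∉ S m := fun m h => Nat.find_min hfind h
  generalize Nat.find hfind = r at hr hmin
  obtain _ | m := r
  · exact absurd hr (hwA 0)
  obtain ⟨a, ha⟩ := hSmem (m + 1) (w (m + 1)) hr
  have ha0 : ∃ i ≤ m, a i ≠ 0 := by
    by_contra! hc
    rw [Finset.sum_eq_zero] at ha
    · exact hwA (m + 1) (by simpa using ha)
    · intro i hi
      rw [hc i (by simpa [Nat.lt_succ_iff] using hi), zero_smul]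
  obtain ⟨x, hxm, hx0, hxs⟩ := ff_scalar p hp a m ha0
  have hRsum : ∀ i, R (∑ l ∈ Finset.range i, x l • w l) (∑ l ∈ Finset.range i, x l ^ p • w (l+1)) := by
    intro i
    induction i with
    | zero => simpa using hA 0 A.zero_mem
    | succ i ih =>
      rw [Finset.sum_range_succ, Finset.sum_range_succ]
      exact hadd _ _ _ _ ih (hsmul _ _ _ (hwR i))
  refine ⟨∑ l ∈ Finset.range (m+1), x l • w l, ?_, ?_, ?_⟩
  · exact B.sum_mem fun i _ => B.smul_mem _ (hwB i)
  · intro hv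
    apply hmin m (by omega)
    rw [Finset.sum_range_succ] at hv
    have h1 : ∑ l ∈ Finset.range m, x l • w l ∈ S m :=
      (S m).sum_mem fun i hi => (S m).smul_mem _ (hwS i m (Finset.mem_range.mp hi))
    have h2 := (S m).sub_mem (hSmono (Nat.zero_le m) hv) h1
    rw [add_sub_cancel_left] at h2
    exact ((S m).smul_mem_iff hxm).mp h2
  · have h1 := hRsum (m + 1)
    have h2 : (∑ l ∈ Finset.range (m+1), x l • w l) - (∑ l ∈ Finset.range (m+1), x l ^ p • w (l+1)) ∈ A := by
      have h3 := A.neg_mem (A.smul_mem (x m ^ p) ha)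
      convert h3 using 1
      rw [Finset.sum_range_succ (fun l => x l ^ p • w (l+1)), Finset.sum_range_succ' (fun l => x l • w l),
        Finset.sum_range_succ' (fun l => a l • w l), smul_sub, smul_add, Finset.smul_sum, hx0]
      simp only [hxs, add_smul, Finset.sum_add_distrib, mul_smul]
      abel
    have h3 := hadd _ _ _ _ h1 (hA _ h2)
    simpa using h3

lemma ff_enum {k M : Type*} [Field k] [AddCommGroup M] [Module k M] [FiniteDimensional k M]
    (C : Set (Submodule k M)) (hC : IsChain (· ≤ ·) C) (hbot : ⊥ ∈ C) (htop : ⊤ ∈ C) :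
    ∃ (r : ℕ) (c : ℕ → Submodule k M), c 0 = ⊥ ∧ c r = ⊤ ∧
      (∀ i j, i ≤ r → j ≤ r → (c i ≤ c j ↔ i ≤ j)) ∧ (∀ i, i ≤ r → c i ∈ C) ∧
      ∀ N ∈ C, ∃ i, i ≤ r ∧ c i = N := by
  classical
  have hinj : Function.Injective (fun N : C => (⟨finrank k N.1, by
      have := Submodule.finrank_le N.1; omega⟩ : Fin (finrank k M + 1))) := by
    rintro ⟨A, hA⟩ ⟨B, hB⟩ h
    have h : finrank k A = finrank k B := by simpa using h
    rcases hC.total hA hB with h1 | h1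
    · exact Subtype.ext (Submodule.eq_of_le_of_finrank_eq h1 h)
    · exact Subtype.ext (Submodule.eq_of_le_of_finrank_eq h1 h.symm).symm
  have : Finite C := Finite.of_injective _ hinj
  have : Fintype C := Fintype.ofFinite C
  let : LinearOrder C := { (inferInstance : PartialOrder C) with
    le_total := fun a b => hC.total a.2 b.2
    toDecidableLE := Classical.decRel _ }
  have hpos : 0 < Fintype.card C := Fintype.card_pos_iff.mpr ⟨⟨⊥, hbot⟩⟩
  obtain ⟨r, hr⟩ : ∃ r, Fintype.card C = r + 1 := ⟨Fintype.card C - 1, by omega⟩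
  let e := monoEquivOfFin C hr
  have key : ∀ i j, i ≤ r → j ≤ r →
      (((e (Fin.ofNat (r+1) i)).1 ≤ (e (Fin.ofNat (r+1) j)).1) ↔ i ≤ j) := by
    intro i j hi hj
    have h1 : (e (Fin.ofNat (r+1) i)) ≤ (e (Fin.ofNat (r+1) j)) ↔ _ := e.le_iff_le
    have h2 : (e (Fin.ofNat (r+1) i)).1 ≤ (e (Fin.ofNat (r+1) j)).1 ↔
      (e (Fin.ofNat (r+1) i)) ≤ (e (Fin.ofNat (r+1) j)) := Iff.rfl
    rw [h2, h1, Fin.le_def, Fin.val_ofNat, Fin.val_ofNat, Nat.mod_eq_of_lt (by omega),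
      Nat.mod_eq_of_lt (by omega)]
  have hsurj : ∀ N ∈ C, ∃ i, i ≤ r ∧ (e (Fin.ofNat (r+1) i)).1 = N := by
    intro N hN
    refine ⟨(e.symm ⟨N, hN⟩).1, by omega, ?_⟩
    simp
  refine ⟨r, fun i => (e (Fin.ofNat (r+1) i)).1, ?_, ?_, key, fun i _ => (e _).2, hsurj⟩
  · obtain ⟨i, hi, h⟩ := hsurj ⊥ hbot
    rw [eq_bot_iff, ← h]
    exact (key 0 i (by omega) hi).mpr (by omega)
  · obtain ⟨i, hi, h⟩ := hsurj ⊤ htop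
    rw [eq_top_iff, ← h]
    exact (key i r hi le_rfl).mpr hi

section
variable {p : ℕ} [Fact p.Prime] {k : Type*} [Field k] [CharP k p] [PerfectRing k p]
  {M : Type*} [AddCommGroup M] [Module k M]

def FFStable (F : M →ₛₗ[frobenius k p] M) (V : M →ₛₗ[((frobeniusEquiv k p).symm : k →+* k)] M)
    (C : Set (Submodule k M)) : Prop :=
  IsChain (· ≤ ·) C ∧ ⊥ ∈ C ∧ ⊤ ∈ C ∧ (∀ N ∈ C, N.map F ∈ C) ∧ ∀ N ∈ C, N.comap V ∈ C

inductive FFGen (F : M →ₛₗ[frobenius k p] M) (V : M →ₛₗ[((frobeniusEquiv k p).symm : k →+* k)] M) :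
    Submodule k M → Prop
  | bot : FFGen F V ⊥
  | top : FFGen F V ⊤
  | map (N) : FFGen F V N → FFGen F V (N.map F)
  | comap (N) : FFGen F V N → FFGen F V (N.comap V)

lemma ffGen_stable (F : M →ₛₗ[frobenius k p] M) (V : M →ₛₗ[((frobeniusEquiv k p).symm : k →+* k)] M)
    (hVF : LinearMap.ker V = LinearMap.range F) : FFStable F V {N | FFGen F V N} := by
  refine ⟨?_, .bot, .top, fun N h => .map N h, fun N h => .comap N h⟩
  have hle : ∀ N L : Submodule k M, N.map F ≤ L.comap V := by
    intro N L
    calc N.map F ≤ LinearMap.range F := LinearMap.map_le_range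
      _ = LinearMap.ker V := hVF.symm
      _ ≤ L.comap V := by
        intro x hx
        rw [LinearMap.mem_ker] at hx
        rw [Submodule.mem_comap, hx]; exact L.zero_mem
  have key : ∀ N, FFGen F V N → ∀ L, FFGen F V L → N ≤ L ∨ L ≤ N := by
    intro N hN
    induction hN with
    | bot => intro L _; exact Or.inl bot_le
    | top => intro L _; exact Or.inr le_top
    | map N hN ih =>
      intro L hL
      cases hL with
      | bot => exact Or.inr bot_le
      | top => exact Or.inl le_top
      | map L hL => exact (ih L hL).imp (fun h => Submodule.map_mono h) (fun h => Submodule.map_mono h)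
      | comap L hL => exact Or.inl (hle _ _)
    | comap N hN ih =>
      intro L hL
      cases hL with
      | bot => exact Or.inr bot_le
      | top => exact Or.inl le_top
      | map L hL => exact Or.inr (hle _ _)
      | comap L hL =>
        exact (ih L hL).imp (fun h => Submodule.comap_mono h) (fun h => Submodule.comap_mono h)
  exact fun N hN L hL _ => key N hN L hL

lemma ff_maximal (F : M →ₛₗ[frobenius k p] M) (V : M →ₛₗ[((frobeniusEquiv k p).symm : k →+* k)] M)
    (hVF : LinearMap.ker V = LinearMap.range F) :
    ∃ C, FFStable F V C ∧ ∀ C', FFStable F V C' → C ⊆ C' → C' ⊆ C := by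
  obtain ⟨C, _, hC⟩ := zorn_subset_nonempty {C | FFStable F V C} (by
    intro c hc hchain ⟨D, hD⟩
    refine ⟨⋃₀ c, ⟨?_, ⟨D, hD, (hc hD).2.1⟩, ⟨D, hD, (hc hD).2.2.1⟩, ?_, ?_⟩,
      fun s hs => Set.subset_sUnion_of_mem hs⟩
    · rintro N ⟨D1, h1, hN⟩ L ⟨D2, h2, hL⟩ hne
      rcases hchain.total h1 h2 with h | h
      · exact (hc h2).1 (h hN) hL hne
      · exact (hc h1).1 hN (h hL) hne
    · rintro N ⟨D1, h1, hN⟩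
      exact ⟨D1, h1, (hc h1).2.2.2.1 N hN⟩
    · rintro N ⟨D1, h1, hN⟩
      exact ⟨D1, h1, (hc h1).2.2.2.2 N hN⟩) _ (ffGen_stable F V hVF)
  exact ⟨C, hC.1, fun C' h h' => hC.2 h h'⟩

lemma ff_index (r : ℕ) (f g : ℕ → ℕ)
    (hf : ∀ i j, i ≤ j → j ≤ r → f i ≤ f j) (hg : ∀ i j, i ≤ j → j ≤ r → g i ≤ g j)
    (hfg : f r = g 0) (hf0 : f 0 = 0) (hgr : g r = r)
    (hne : ∀ j, j < r → f j = f (j + 1) → g j = g (j + 1) → False) :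
    ∀ j, j < r → (f (j + 1) = f j + 1 ∧ g (j + 1) = g j) ∨ (f (j + 1) = f j ∧ g (j + 1) = g j + 1) := by
  have hs : ∀ j, j < r → f j + g j + 1 ≤ f (j + 1) + g (j + 1) := by
    intro j hj
    have h1 := hf j (j + 1) (by omega) (by omega)
    have h2 := hg j (j + 1) (by omega) (by omega)
    have h3 : ¬ (f j = f (j + 1) ∧ g j = g (j + 1)) := fun h => hne j hj h.1 h.2
    omega
  have hlow : ∀ j, j ≤ r → f r + j ≤ f j + g j := by
    intro j
    induction j with
    | zero => intro _; omega
    | succ j ih => intro h; have := ih (by omega); have := hs j (by omega); omega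
  have hup : ∀ d, d ≤ r → f (r - d) + g (r - d) + d ≤ f r + r := by
    intro d
    induction d with
    | zero => intro _; simp; omega
    | succ d ih =>
      intro h
      have h1 := ih (by omega)
      have h2 := hs (r - (d + 1)) (by omega)
      rw [show r - (d + 1) + 1 = r - d by omega] at h2
      omega
  intro j hj
  have h1 := hf j (j + 1) (by omega) (by omega)
  have h2 := hg j (j + 1) (by omega) (by omega)
  have h3 := hlow j (by omega)
  have h4 := hup (r - (j + 1)) (by omega)
  rw [show r - (r - (j + 1)) = j + 1 by omega] at h4
  have h5 := hs j hj
  omega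


lemma ff_vec [IsAlgClosed k] [FiniteDimensional k M]
    (F : M →ₛₗ[frobenius k p] M) (V : M →ₛₗ[((frobeniusEquiv k p).symm : k →+* k)] M)
    (hFV : LinearMap.ker F = LinearMap.range V)
    (r : ℕ) (c : ℕ → Submodule k M) (f g : ℕ → ℕ)
    (hlt : ∀ j, j < r → c j < c (j + 1))
    (hf : ∀ j, j ≤ r → (c j).map F = c (f j)) (hg : ∀ j, j ≤ r → (c j).comap V = c (g j))
    (hfm : ∀ i j, i ≤ j → j ≤ r → f i ≤ f j) (hgm : ∀ i j, i ≤ j → j ≤ r → g i ≤ g j)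
    (hfg : f r = g 0)
    (hty : ∀ j, j < r →
      (f (j + 1) = f j + 1 ∧ g (j + 1) = g j) ∨ (f (j + 1) = f j ∧ g (j + 1) = g j + 1))
    (hfr : ∀ j, j ≤ r → f j ≤ r) (hgr : ∀ j, j ≤ r → g j ≤ r)
    (hbig : ∃ j, j < r ∧ ¬ c j ⋖ c (j + 1)) :
    ∃ v : Fin r → M, (∀ j : Fin r, v j ∈ c (j + 1)) ∧ (∃ j : Fin r, v j ∉ c j) ∧
      (∀ j : Fin r, v j ∉ c j → ¬ c j ⋖ c (j + 1)) ∧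
      ∀ i j : Fin r, (f j = i → f (j + 1) = i + 1 → F (v j) - v i ∈ c i) ∧
        (g j = i → g (j + 1) = i + 1 → V (v i) - v j ∈ c j) := by
  classical
  have hFs : ∀ (a : k) x, F (a • x) = a ^ p • F x := fun a x => by
    rw [F.map_smulₛₗ, frobenius_def]
  have hVs : ∀ (a : k) x, V (a ^ p • x) = a • V x := fun a x => by
    rw [V.map_smulₛₗ, ← frobenius_def]
    congr 1
    exact frobeniusEquiv_symm_apply_frobenius k p a
  have hFmem : ∀ j x, j ≤ r → x ∈ c j → F x ∈ c (f j) := fun j x hj hx => by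
    rw [← hf j hj]; exact Submodule.mem_map_of_mem hx
  have hVmem : ∀ j x, j ≤ r → (x ∈ c (g j) ↔ V x ∈ c j) := fun j x hj => by
    rw [← hg j hj]; exact Submodule.mem_comap
  have hker : ∀ j, j < r → g (j + 1) = g j → ∀ x ∈ c (j + 1), F x = 0 → x ∈ c j := by
    intro j hj hgj x hx hFx
    have h1 : x ∈ LinearMap.range V := by rw [← hFV]; exact hFx
    obtain ⟨z, rfl⟩ := h1
    rw [← hVmem j z (by omega), ← hgj, hVmem (j + 1) z (by omega)]
    exact hx
  have hcok : ∀ j, j < r → f (j + 1) = f j → ∀ x ∈ c (j + 1), ∃ z, V z - x ∈ c j := by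
    intro j hj hfj x hx
    have h1 := hFmem (j + 1) x (by omega) hx
    rw [hfj, ← hf j (by omega)] at h1
    obtain ⟨y, hy, hyx⟩ := h1
    have h2 : x - y ∈ LinearMap.range V := by
      rw [← hFV, LinearMap.mem_ker, map_sub, hyx, sub_self]
    obtain ⟨z, hz⟩ := h2
    refine ⟨z, ?_⟩
    rw [hz]
    simpa using hy
  -- bigness is preserved
  have hbF : ∀ j, j < r → f (j + 1) = f j + 1 → g (j + 1) = g j → ¬ c j ⋖ c (j + 1) →
      ¬ c (f j) ⋖ c (f j + 1) := by
    intro j hj h1 h2 hb hcov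
    obtain ⟨N, hN1, hN2⟩ := (not_covBy_iff (hlt j hj)).mp hb
    have h3 : c (f j) ≤ N.map F := by rw [← hf j (by omega)]; exact Submodule.map_mono hN1.le
    have h4 : N.map F ≤ c (f j + 1) := by
      rw [← h1, ← hf (j + 1) (by omega)]; exact Submodule.map_mono hN2.le
    have hA : c (f j) < N.map F := by
      refine lt_of_le_of_ne h3 fun h => ?_
      refine hN1.not_ge fun x hx => ?_
      have h5 : F x ∈ N.map F := Submodule.mem_map_of_mem hx
      rw [← h, ← hf j (by omega)] at h5
      obtain ⟨y, hy, hyx⟩ := h5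
      have h6 := hker j hj h2 (x - y) ((c (j+1)).sub_mem (hN2.le hx) ((hlt j hj).le hy))
        (by rw [map_sub, hyx, sub_self])
      simpa using (c j).add_mem h6 hy
    have hB : N.map F < c (f j + 1) := by
      refine lt_of_le_of_ne h4 fun h => ?_
      refine hN2.not_ge fun x hx => ?_
      have h5 := hFmem (j + 1) x (by omega) hx
      rw [h1, ← h] at h5
      obtain ⟨y, hy, hyx⟩ := h5
      have h6 := hker j hj h2 (x - y) ((c (j+1)).sub_mem hx (hN2.le hy))
        (by rw [map_sub, hyx, sub_self])
      simpa using N.add_mem (hN1.le h6) hy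
    exact hcov.2 hA hB
  have hbV : ∀ j, j < r → f (j + 1) = f j → g (j + 1) = g j + 1 → ¬ c j ⋖ c (j + 1) →
      ¬ c (g j) ⋖ c (g j + 1) := by
    intro j hj h1 h2 hb hcov
    obtain ⟨N, hN1, hN2⟩ := (not_covBy_iff (hlt j hj)).mp hb
    have h3 : c (g j) ≤ N.comap V := by rw [← hg j (by omega)]; exact Submodule.comap_mono hN1.le
    have h4 : N.comap V ≤ c (g j + 1) := by
      rw [← h2, ← hg (j + 1) (by omega)]; exact Submodule.comap_mono hN2.le
    have hA : c (g j) < N.comap V := by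
      refine lt_of_le_of_ne h3 fun h => ?_
      refine hN1.not_ge fun x hx => ?_
      obtain ⟨z, hz⟩ := hcok j hj h1 x (hN2.le hx)
      have h5 : z ∈ N.comap V := by
        rw [Submodule.mem_comap]
        simpa using N.add_mem (hN1.le hz) hx
      rw [← h, hVmem j z (by omega)] at h5
      simpa using (c j).sub_mem h5 hz
    have hB : N.comap V < c (g j + 1) := by
      refine lt_of_le_of_ne h4 fun h => ?_
      refine hN2.not_ge fun x hx => ?_
      obtain ⟨z, hz⟩ := hcok j hj h1 x hx
      have h5 : z ∈ c (g j + 1) := by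
        rw [← h2, hVmem (j + 1) z (by omega)]
        simpa using (c (j + 1)).add_mem ((hlt j hj).le hz) hx
      rw [← h, Submodule.mem_comap] at h5
      simpa using N.sub_mem h5 (hN1.le hz)
    exact hcov.2 hA hB
  let b : ℕ → Submodule k M := fun j => if c j ⋖ c (j + 1) then c j else c (j + 1)
  have hcb : ∀ j, j < r → c j ≤ b j := by
    intro j hj
    by_cases h : c j ⋖ c (j + 1)
    · simp only [b, if_pos h]; exact le_rfl
    · simp only [b, if_neg h]; exact (hlt j hj).le
  have hbc : ∀ j, j < r → b j ≤ c (j + 1) := by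
    intro j hj
    by_cases h : c j ⋖ c (j + 1)
    · simp only [b, if_pos h]; exact (hlt j hj).le
    · simp only [b, if_neg h]; exact le_rfl
  let A : Submodule k (Fin r → M) := Submodule.pi Set.univ fun j => c j
  let B : Submodule k (Fin r → M) := Submodule.pi Set.univ fun j => b j
  have hAm : ∀ w, w ∈ A ↔ ∀ j : Fin r, w j ∈ c j := fun w => by simp [A]
  have hBm : ∀ w, w ∈ B ↔ ∀ j : Fin r, w j ∈ b j := fun w => by simp [B]
  let R : (Fin r → M) → (Fin r → M) → Prop := fun w u =>
    ∀ i j : Fin r, (f j = i → f (j + 1) = i + 1 → F (w j) - u i ∈ c i) ∧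
        (g j = i → g (j + 1) = i + 1 → V (u i) - w j ∈ c j)
  obtain ⟨v, hvB, hvA, hvR⟩ := ff_core (k := k) p (Fact.out : p.Prime).two_le A B R
    (by
      intro x y x' y' h h' i j
      refine ⟨fun h1 h2 => ?_, fun h1 h2 => ?_⟩
      · convert (c i).add_mem ((h i j).1 h1 h2) ((h' i j).1 h1 h2) using 1
        simp only [Pi.add_apply, map_add]; abel
      · convert (c j).add_mem ((h i j).2 h1 h2) ((h' i j).2 h1 h2) using 1
        simp only [Pi.add_apply, map_add]; abel)
    (by
      intro a x y h i j
      refine ⟨fun h1 h2 => ?_, fun h1 h2 => ?_⟩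
      · convert (c i).smul_mem (a ^ p) ((h i j).1 h1 h2) using 1
        rw [Pi.smul_apply, Pi.smul_apply, hFs, smul_sub]
      · convert (c j).smul_mem a ((h i j).2 h1 h2) using 1
        rw [Pi.smul_apply, Pi.smul_apply, hVs, smul_sub])
    (by
      intro y hy i j
      rw [hAm] at hy
      refine ⟨fun h1 h2 => ?_, fun h1 h2 => ?_⟩
      · simpa using hy i
      · have := hy i
        rw [← h1, hVmem j _ (by omega)] at this
        simpa using this)
    (by
      intro w hw
      rw [hBm] at hw
      have key : ∀ i : Fin r, ∃ u ∈ b i, ∀ j : Fin r,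
          (f j = i → f (j + 1) = i + 1 → F (w j) - u ∈ c i) ∧
          (g j = i → g (j + 1) = i + 1 → V u - w j ∈ c j) := by
        intro i
        by_cases h1 : ∃ j : Fin r, f j = i ∧ f (j + 1) = i + 1
        · obtain ⟨j, hj1, hj2⟩ := h1
          have hgj : g (j + 1) = g j := by have := hty j j.2; omega
          refine ⟨F (w j), ?_, fun j' => ⟨fun h1 h2 => ?_, fun h1 h2 => ?_⟩⟩
          · by_cases hb : c j ⋖ c (j + 1)
            · have h3 := hw j
              simp only [b, if_pos hb] at h3
              apply hcb i i.2
              rw [← hj1]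
              exact hFmem j _ (by omega) h3
            · have h3 := hFmem (j + 1) _ (by omega) (hbc j j.2 (hw j))
              have h4 := hbF j j.2 (by omega) hgj hb
              rw [hj1] at h4
              simp only [b, if_neg h4]
              rwa [hj2] at h3
          · have : j = j' := by
              rcases lt_trichotomy (j : ℕ) (j' : ℕ) with h | h | h
              · have := hfm (j + 1) j' (by omega) (by omega); omega
              · exact Fin.ext h
              · have := hfm (j' + 1) j (by omega) (by omega); omega
            subst this
            simp
          · exfalso
            have h3 := hfm (j + 1) r (by omega) (by omega)
            have h4 := hgm 0 j' (by omega) (by omega)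
            omega
        · by_cases h2 : ∃ j : Fin r, g j = i ∧ g (j + 1) = i + 1
          · obtain ⟨j, hj1, hj2⟩ := h2
            have hfj : f (j + 1) = f j := by have := hty j j.2; omega
            obtain ⟨z, hz⟩ := hcok j j.2 hfj (w j) (hbc j j.2 (hw j))
            refine ⟨z, ?_, fun j' => ⟨fun h3 h4 => absurd ⟨j', h3, h4⟩ h1, fun h3 h4 => ?_⟩⟩
            · by_cases hb : c j ⋖ c (j + 1)
              · have h3 := hw j
                simp only [b, if_pos hb] at h3
                apply hcb i i.2
                rw [← hj1, hVmem j _ (by omega)]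
                simpa using (c j).add_mem hz h3
              · have h4 := hbV j j.2 hfj (by omega) hb
                rw [hj1] at h4
                simp only [b, if_neg h4]
                rw [← hj2, hVmem (j + 1) _ (by omega)]
                simpa using (c (j+1)).add_mem ((hlt j j.2).le hz) (hbc j j.2 (hw j))
            · have : j = j' := by
                rcases lt_trichotomy (j : ℕ) (j' : ℕ) with h | h | h
                · have := hgm (j + 1) j' (by omega) (by omega); omega
                · exact Fin.ext h
                · have := hgm (j' + 1) j (by omega) (by omega); omega
              subst this
              exact hz
          · exact ⟨0, (b i).zero_mem, fun j' => ⟨fun h3 h4 => absurd ⟨j', h3, h4⟩ h1,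
              fun h3 h4 => absurd ⟨j', h3, h4⟩ h2⟩⟩
      choose u hu hu' using key
      exact ⟨u, (hBm u).mpr hu, hu'⟩)
    (by
      intro w u hR hw hu
      rw [hBm] at hw
      rw [hAm] at hu ⊢
      intro j
      have hfj := hfr (j + 1) (by omega)
      have hgj := hgr (j + 1) (by omega)
      rcases hty j j.2 with ⟨h1, h2⟩ | ⟨h1, h2⟩
      · have h3 := (hR ⟨f j, by omega⟩ j).1 rfl h1
        have h4 := (c (f j)).add_mem h3 (hu ⟨f j, by omega⟩)
        simp only [sub_add_cancel] at h4
        rw [← hf j (by omega)] at h4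
        obtain ⟨y, hy, hyx⟩ := h4
        have h6 := hker j j.2 h2 (w j - y)
          ((c (j+1)).sub_mem (hbc j j.2 (hw j)) ((hlt j j.2).le hy))
          (by rw [map_sub, hyx, sub_self])
        simpa using (c j).add_mem h6 hy
      · have h3 := (hR ⟨g j, by omega⟩ j).2 rfl h2
        have h4 := (hVmem j _ (by omega)).mp (hu ⟨g j, by omega⟩)
        simpa using (c j).sub_mem h4 h3)
    (by
      obtain ⟨j, hj, hb⟩ := hbig
      obtain ⟨x, hx1, hx2⟩ := SetLike.exists_of_lt (hlt j hj)
      refine ⟨Pi.single ⟨j, hj⟩ x, ?_, ?_⟩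
      · rw [hBm]
        intro i
        by_cases h : i = ⟨j, hj⟩
        · subst h
          simp only [Pi.single_eq_same, b, if_neg hb]
          exact hx1
        · rw [Pi.single_eq_of_ne h]; exact (b i).zero_mem
      · rw [hAm]
        intro h
        have := h ⟨j, hj⟩
        simp only [Pi.single_eq_same] at this
        exact hx2 this)
  rw [hBm] at hvB
  rw [hAm] at hvA
  push Not at hvA
  refine ⟨v, fun j => hbc j j.2 (hvB j), hvA, fun j hj hc => ?_, hvR⟩
  have := hvB j
  simp only [b, if_pos hc] at this
  exact hj this


lemma ff_main [IsAlgClosed k] [FiniteDimensional k M]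
    (F : M →ₛₗ[frobenius k p] M) (V : M →ₛₗ[((frobeniusEquiv k p).symm : k →+* k)] M)
    (hFV : LinearMap.ker F = LinearMap.range V)
    (hVF : LinearMap.ker V = LinearMap.range F) :
    ∃ (r : ℕ) (c : ℕ → Submodule k M), c 0 = ⊥ ∧ c r = ⊤ ∧
      (∀ j, j < r → c j ⋖ c (j + 1)) ∧
      (∀ j, j ≤ r → ∃ i, i ≤ r ∧ (c j).map F = c i) ∧
      (∀ j, j ≤ r → ∃ i, i ≤ r ∧ (c j).comap V = c i) := by
  classical
  obtain ⟨C, hC, hmax⟩ := ff_maximal F V hVF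
  obtain ⟨hch, hbot, htop, hCF, hCV⟩ := id hC
  obtain ⟨r, c, hc0, hcr, hle, hcC, hsurj⟩ := ff_enum C hch hbot htop
  have hexf : ∀ j, j ≤ r → ∃ i, i ≤ r ∧ (c j).map F = c i := fun j hj => by
    obtain ⟨i, hi, h⟩ := hsurj _ (hCF _ (hcC j hj))
    exact ⟨i, hi, h.symm⟩
  have hexg : ∀ j, j ≤ r → ∃ i, i ≤ r ∧ (c j).comap V = c i := fun j hj => by
    obtain ⟨i, hi, h⟩ := hsurj _ (hCV _ (hcC j hj))
    exact ⟨i, hi, h.symm⟩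
  refine ⟨r, c, hc0, hcr, ?_, hexf, hexg⟩
  choose! f hfr hf using hexf
  choose! g hgr hg using hexg
  have hinj : ∀ i j, i ≤ r → j ≤ r → c i = c j → i = j := fun i j hi hj h =>
    le_antisymm ((hle i j hi hj).mp h.le) ((hle j i hj hi).mp h.ge)
  have hlt : ∀ j, j < r → c j < c (j + 1) := fun j hj =>
    lt_of_le_not_ge ((hle _ _ (by omega) (by omega)).mpr (by omega)) fun h => by
      have := (hle _ _ (by omega) (by omega)).mp h
      omega
  have hfm : ∀ i j, i ≤ j → j ≤ r → f i ≤ f j := fun i j hij hj => by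
    rw [← hle _ _ (hfr i (by omega)) (hfr j hj), ← hf i (by omega), ← hf j hj]
    exact Submodule.map_mono ((hle i j (by omega) hj).mpr hij)
  have hgm : ∀ i j, i ≤ j → j ≤ r → g i ≤ g j := fun i j hij hj => by
    rw [← hle _ _ (hgr i (by omega)) (hgr j hj), ← hg i (by omega), ← hg j hj]
    exact Submodule.comap_mono ((hle i j (by omega) hj).mpr hij)
  have hfg : f r = g 0 := by
    apply hinj _ _ (hfr r le_rfl) (hgr 0 (by omega))
    rw [← hf r le_rfl, ← hg 0 (by omega), hc0, hcr, Submodule.map_top, ← hVF]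
    rfl
  have hf0 : f 0 = 0 := by
    apply hinj _ _ (hfr 0 (by omega)) (by omega)
    rw [← hf 0 (by omega), hc0, Submodule.map_bot]
  have hgrr : g r = r := by
    apply hinj _ _ (hgr r le_rfl) le_rfl
    rw [← hg r le_rfl, hcr, Submodule.comap_top]
  have hne : ∀ j, j < r → f j = f (j + 1) → g j = g (j + 1) → False := by
    intro j hj h1 h2
    refine (hlt j hj).not_ge fun x hx => ?_
    have h3 : F x ∈ c (f (j + 1)) := by rw [← hf (j+1) (by omega)]; exact Submodule.mem_map_of_mem hx
    rw [← h1, ← hf j (by omega)] at h3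
    obtain ⟨y, hy, hyx⟩ := h3
    have h4 : x - y ∈ LinearMap.range V := by
      rw [← hFV, LinearMap.mem_ker, map_sub, hyx, sub_self]
    obtain ⟨z, hz⟩ := h4
    have h5 : z ∈ (c (j+1)).comap V := by
      rw [Submodule.mem_comap, hz]; exact (c (j+1)).sub_mem hx ((hlt j hj).le hy)
    rw [hg (j+1) (by omega), ← h2, ← hg j (by omega), Submodule.mem_comap, hz] at h5
    simpa using (c j).add_mem h5 hy
  have hty := ff_index r f g hfm hgm hfg hf0 hgrr hne
  by_contra hcon
  push Not at hcon
  obtain ⟨v, hv1, ⟨j0, hj0⟩, hv3, hv4⟩ :=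
    ff_vec F V hFV r c f g hlt hf hg hfm hgm hfg hty hfr hgr hcon
  let N : Fin r → Submodule k M := fun j => Submodule.span k {v j} ⊔ c j
  have hN1 : ∀ j : Fin r, c j ≤ N j := fun j => le_sup_right
  have hN2 : ∀ j : Fin r, N j ≤ c (j + 1) := fun j =>
    sup_le (by rw [Submodule.span_singleton_le_iff_mem]; exact hv1 j) (hlt j j.2).le
  have hNmem : ∀ (j : Fin r) x, x ∈ N j ↔ ∃ a : k, x - a • v j ∈ c j := by
    intro j x
    constructor
    · intro hx
      obtain ⟨y, hy, z, hz, rfl⟩ := Submodule.mem_sup.mp hx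
      obtain ⟨a, rfl⟩ := Submodule.mem_span_singleton.mp hy
      exact ⟨a, by simpa using hz⟩
    · rintro ⟨a, ha⟩
      have := (N j).add_mem (hN1 j ha) ((N j).smul_mem a
        ((le_sup_left : _ ≤ N j) (Submodule.mem_span_singleton_self (v j))))
      simpa using this
  have hFs : ∀ (a : k) x, F (a • x) = a ^ p • F x := fun a x => by
    rw [F.map_smulₛₗ, frobenius_def]
  have hVs : ∀ (a : k) x, V (a ^ p • x) = a • V x := fun a x => by
    rw [V.map_smulₛₗ, ← frobenius_def]
    congr 1
    exact frobeniusEquiv_symm_apply_frobenius k p a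
  have hroot : ∀ a : k, ∃ b : k, b ^ p = a := fun a =>
    ⟨(frobeniusEquiv k p).symm a, frobeniusEquiv_symm_pow_p k p a⟩
  let C' : Set (Submodule k M) := C ∪ Set.range N
  have hst : FFStable F V C' := by
    refine ⟨?_, Or.inl hbot, Or.inl htop, ?_, ?_⟩
    · have hCN : ∀ L ∈ C, ∀ j : Fin r, L ≤ N j ∨ N j ≤ L := by
        intro L hL j
        obtain ⟨i, hi, rfl⟩ := hsurj L hL
        rcases Nat.lt_or_ge j i with h | h
        · exact Or.inr ((hN2 j).trans ((hle _ _ (by omega) (by omega)).mpr (by omega)))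
        · exact Or.inl (((hle _ _ (by omega) (by omega)).mpr h).trans (hN1 j))
      rintro L1 (h1 | ⟨j1, rfl⟩) L2 (h2 | ⟨j2, rfl⟩) hne
      · exact hch h1 h2 hne
      · exact hCN L1 h1 j2
      · exact (hCN L2 h2 j1).symm
      · rcases lt_trichotomy (j1 : ℕ) (j2 : ℕ) with h | h | h
        · exact Or.inl ((hN2 j1).trans
            (((hle (j1 + 1) j2 (by omega) (by omega)).mpr (by omega)).trans (hN1 j2)))
        · exact absurd (congrArg N (Fin.ext h)) hne
        · exact Or.inr ((hN2 j2).trans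
            (((hle (j2 + 1) j1 (by omega) (by omega)).mpr (by omega)).trans (hN1 j1)))
    · rintro L (hL | ⟨j, rfl⟩)
      · exact Or.inl (hCF L hL)
      · have hfj := hfr (j + 1) (by omega)
        rcases hty j j.2 with ⟨h1, h2⟩ | ⟨h1, h2⟩
        · right
          have hi : f j < r := by omega
          have h3 := (hv4 ⟨f j, hi⟩ j).1 rfl h1
          refine ⟨⟨f j, hi⟩, ?_⟩
          ext x
          rw [hNmem, Submodule.mem_map]
          constructor
          · rintro ⟨a, ha⟩
            obtain ⟨b, rfl⟩ := hroot a
            have h4 : x - b ^ p • F (v j) ∈ c (f j) := by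
              convert (c (f j)).sub_mem ha ((c (f j)).smul_mem (b ^ p) h3) using 1
              rw [smul_sub]; abel
            rw [← hf j (by omega)] at h4
            obtain ⟨y, hy, hyx⟩ := h4
            refine ⟨y + b • v j, (hNmem j _).mpr ⟨b, by simpa using hy⟩, ?_⟩
            rw [map_add, hyx, hFs]; abel
          · rintro ⟨y, hy, rfl⟩
            obtain ⟨a, ha⟩ := (hNmem j y).mp hy
            refine ⟨a ^ p, ?_⟩
            have h4 : F (y - a • v j) ∈ c (f j) := by
              rw [← hf j (by omega)]; exact Submodule.mem_map_of_mem ha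
            convert (c (f j)).add_mem h4 ((c (f j)).smul_mem (a ^ p) h3) using 1
            rw [map_sub, hFs, smul_sub]; abel
        · left
          have : (N j).map F = c (f j) := by
            apply le_antisymm
            · rw [← h1, ← hf (j + 1) (by omega)]; exact Submodule.map_mono (hN2 j)
            · rw [← hf j (by omega)]; exact Submodule.map_mono (hN1 j)
          rw [this]; exact hcC _ (hfr _ (by omega))
    · rintro L (hL | ⟨j, rfl⟩)
      · exact Or.inl (hCV L hL)
      · have hgj := hgr (j + 1) (by omega)
        rcases hty j j.2 with ⟨h1, h2⟩ | ⟨h1, h2⟩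
        · left
          have : (N j).comap V = c (g j) := by
            apply le_antisymm
            · rw [← h2, ← hg (j + 1) (by omega)]; exact Submodule.comap_mono (hN2 j)
            · rw [← hg j (by omega)]; exact Submodule.comap_mono (hN1 j)
          rw [this]; exact hcC _ (hgr _ (by omega))
        · right
          have hi : g j < r := by omega
          have h3 := (hv4 ⟨g j, hi⟩ j).2 rfl h2
          refine ⟨⟨g j, hi⟩, ?_⟩
          ext x
          rw [Submodule.mem_comap, hNmem, hNmem]
          have h4 : ∀ a : k, x - a ^ p • v ⟨g j, hi⟩ ∈ c (g j) ↔ V x - a • v j ∈ c j := by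
            intro a
            rw [← hg j (by omega), Submodule.mem_comap, map_sub, hVs]
            have h5 := (c j).smul_mem a h3
            rw [← (c j).add_mem_iff_left h5]
            rw [smul_sub]
            rw [show V x - a • V (v ⟨g j, hi⟩) + (a • V (v ⟨g j, hi⟩) - a • v j) = V x - a • v j by abel]
          constructor
          · rintro ⟨a, ha⟩
            obtain ⟨b, rfl⟩ := hroot a
            exact ⟨b, (h4 b).mp ha⟩
          · rintro ⟨a, ha⟩
            exact ⟨a ^ p, (h4 a).mpr ha⟩
  have hNC : N j0 ∈ C := hmax C' hst Set.subset_union_left (Or.inr ⟨j0, rfl⟩)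
  obtain ⟨i, hi, hiN⟩ := hsurj _ hNC
  have hcov : c j0 ⋖ N j0 := Submodule.covBy_span_singleton_sup hj0
  have h1 : (j0 : ℕ) < i := by
    by_contra h
    have := (hle i j0 hi (by omega)).mpr (by omega)
    rw [hiN] at this
    exact hcov.lt.not_ge this
  have h2 : N j0 = c (j0 + 1) := by
    apply le_antisymm (hN2 j0)
    rw [← hiN]
    exact (hle _ _ (by omega) hi).mpr h1
  rw [h2] at hcov
  exact hv3 j0 hj0 hcov

end

lemma ff_finrank {k M : Type*} [Field k] [AddCommGroup M] [Module k M] [FiniteDimensional k M]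
    (A B : Submodule k M) (h : A ⋖ B) : finrank k B = finrank k A + 1 := by
  obtain ⟨x, hxB, hxA⟩ := SetLike.exists_of_lt h.lt
  have hcov : A ⋖ Submodule.span k {x} ⊔ A := Submodule.covBy_span_singleton_sup hxA
  have hle : Submodule.span k {x} ⊔ A ≤ B :=
    sup_le (by rw [Submodule.span_singleton_le_iff_mem]; exact hxB) h.le
  have heq : Submodule.span k {x} ⊔ A = B := by
    by_contra hne
    exact h.2 hcov.lt (lt_of_le_of_ne hle hne)
  have hx0 : x ≠ 0 := by rintro rfl; exact hxA A.zero_mem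
  have hinf : Submodule.span k {x} ⊓ A = ⊥ := by
    rw [eq_bot_iff]
    rintro y ⟨hy1, hy2⟩
    obtain ⟨a, rfl⟩ := Submodule.mem_span_singleton.mp hy1
    by_cases ha : a = 0
    · simp [ha]
    · exact absurd ((A.smul_mem_iff ha).mp hy2) hxA
  have := Submodule.finrank_sup_add_finrank_inf_eq (Submodule.span k {x}) A
  rw [hinf, heq, finrank_span_singleton hx0, finrank_bot] at this
  omega

/-- Let `(M, F, V)` be the Dieudonné space of a BT₁ group scheme over an algebraically closed
field `k` of characteristic `p`.  Then there exists a *final filtration* of `(M, F, V)`: a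
complete flag `0 = M_0 ⊂ M_1 ⊂ ⋯ ⊂ M_n = M` of `k`-subspaces with `dim_k M_j = j`
(where `n = dim_k M`) such that for every `j` there exist indices `j'` and `j''` with
`F(M_j) = M_{j'}` and `V⁻¹(M_j) = M_{j''}`. -/
theorem exists_final_filtration (p : ℕ) [Fact p.Prime] (k : Type*) [Field k] [CharP k p]
    [PerfectRing k p] [IsAlgClosed k] (M : Type*) [AddCommGroup M] [Module k M]
    [FiniteDimensional k M] (n : ℕ) (hn : finrank k M = n)
    (F : M →ₛₗ[frobenius k p] M)
    (V : M →ₛₗ[((frobeniusEquiv k p).symm : k →+* k)] M)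
    (hFV : LinearMap.ker F = LinearMap.range V)
    (hVF : LinearMap.ker V = LinearMap.range F) :
    ∃ Mfilt : Fin (n + 1) → Submodule k M,
      Mfilt 0 = ⊥ ∧ Mfilt (Fin.last n) = ⊤ ∧ StrictMono Mfilt ∧
      (∀ j : Fin (n + 1), finrank k (Mfilt j) = (j : ℕ)) ∧
      ∀ j : Fin (n + 1),
        (∃ j' : Fin (n + 1), (Mfilt j).map F = Mfilt j') ∧
        (∃ j'' : Fin (n + 1), (Mfilt j).comap V = Mfilt j'') := by
  obtain ⟨r, c, hc0, hcr, hcov, hF, hV⟩ := ff_main F V hFV hVF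
  have hfin : ∀ j, j ≤ r → finrank k (c j) = j := by
    intro j
    induction j with
    | zero => intro _; rw [hc0, finrank_bot]
    | succ j ih => intro h; rw [ff_finrank _ _ (hcov j (by omega)), ih (by omega)]
  obtain rfl : r = n := by
    rw [← hfin r le_rfl, hcr, finrank_top, hn]
  refine ⟨fun j => c j, hc0, hcr, ?_, fun j => hfin j (by omega), fun j => ⟨?_, ?_⟩⟩
  · rw [Fin.strictMono_iff_lt_succ]
    intro i
    exact (hcov i i.2).lt
  · obtain ⟨i, hi, h⟩ := hF j (by omega)
    exact ⟨⟨i, by omega⟩, h⟩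
  · obtain ⟨i, hi, h⟩ := hV j (by omega)
    exact ⟨⟨i, by omega⟩, h⟩
end

section
/- Let k be an algebraically closed field of characteristic p, and let (M, F, V) and (M′, F′, V′) be two such triples. They are isomorphic — i.e., there is a k-linear bijection α : M → M′ with α∘F = F′∘α and α∘V = V′∘α — if and only if for every finite word w in the two subspace operations N ↦ F(N) and N ↦ V^{−1}(N), the subspaces obtained by applying w to M and to M′ (using F, V and F′, V′ respectively) have the same dimension. -/
open Module

namespace Kraft

section lang

set_option linter.unusedSectionVars false

variable {k : Type*} [Field k] {Z : Type*} [AddCommGroup Z] [Module k Z]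

def Bseq (τ : k →+* k) (c : ℕ → k) (ε t : k) : ℕ → k
  | 0 => ε
  | (j+1) => τ (Bseq τ c ε t j) + c j * τ t

lemma Bseq_eq (τ : k →+* k) (c : ℕ → k) (ε t : k) (hε : τ ε = ε) (j : ℕ) :
    Bseq τ c ε t j = ε + ∑ l ∈ Finset.range j, (τ ^ (j - 1 - l)) (c l) * (τ ^ (j - l)) t := by
  induction j with
  | zero => simp [Bseq]
  | succ j ih =>
    rw [Bseq, ih, Finset.sum_range_succ, map_add, hε, map_sum]
    simp only [Nat.add_sub_cancel, Nat.sub_self, Nat.add_sub_cancel_left, pow_zero, pow_one]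
    rw [← add_assoc]
    congr 2
    apply Finset.sum_congr rfl
    intro l hl
    have hl := Finset.mem_range.1 hl
    rw [map_mul, show j - l = (j - 1 - l) + 1 by omega, show j + 1 - l = (j - 1 - l + 1) + 1 by omega,
      pow_succ' τ (j - 1 - l + 1), pow_succ' τ (j - 1 - l)]
    rfl

lemma krylov (τ : k →+* k) (W : Z →ₛₗ[τ] Z) (c : ℕ → k) (m : ℕ) (z : Z) (ε t : k)
    (hε : τ ε = ε) (hz : W^[m] z = ∑ j ∈ Finset.range m, c j • W^[j] z)
    (ht : Bseq τ c ε t m = t) :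
    (∑ j ∈ Finset.range m, Bseq τ c ε t (j+1) • W^[j] z)
      = ε • z + W (∑ j ∈ Finset.range m, Bseq τ c ε t (j+1) • W^[j] z) := by
  have h1 : (∑ j ∈ Finset.range m, Bseq τ c ε t (j+1) • W^[j] z)
      = ∑ j ∈ Finset.range (m+1), τ (Bseq τ c ε t j) • W^[j] z := by
    rw [Finset.sum_range_succ, ht, hz, Finset.smul_sum, ← Finset.sum_add_distrib]
    apply Finset.sum_congr rfl
    intro j _
    rw [Bseq, add_smul, smul_smul, mul_comm]
  conv_lhs => rw [h1, Finset.sum_range_succ']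
  rw [map_sum, add_comm]
  congr 1
  · simp [Bseq, hε]
  · apply Finset.sum_congr rfl
    intro j _
    rw [LinearMap.map_smulₛₗ, Function.iterate_succ_apply']

variable (p : ℕ) [Fact p.Prime] [IsAlgClosed k]

lemma tau_pow (τ : k →+* k) (hτ : ∀ a, τ a ^ p = a) (s : k) (m l : ℕ) (h : l ≤ m) :
    (τ ^ (m - l)) (s ^ p ^ m) = s ^ p ^ l := by
  obtain ⟨d, rfl⟩ := Nat.exists_eq_add_of_le h
  have : ∀ d (x : k), (τ ^ d) (x ^ p ^ d) = x := by
    intro d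
    induction d with
    | zero => simp
    | succ d ih =>
      intro x
      have h2 : τ (x ^ p) = x := by rw [map_pow, hτ]
      rw [pow_succ τ, RingHom.mul_def, RingHom.comp_apply, pow_succ p, mul_comm, pow_mul, map_pow, h2, ih]
  rw [Nat.add_sub_cancel_left, pow_add, pow_mul, this]

open Polynomial in
noncomputable def Qp (m : ℕ) (e : ℕ → k) (ε : k) : k[X] :=
  X ^ p ^ m - (∑ l ∈ Finset.range m, C (e l) * X ^ p ^ l + C ε)

open Polynomial in
lemma Qp_deg (m : ℕ) (e : ℕ → k) (ε : k) : (Qp p m e ε).Monic ∧ (Qp p m e ε).degree = (p ^ m : ℕ) := by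
  have hp := (Fact.out : p.Prime)
  have hd : (∑ l ∈ Finset.range m, C (e l) * X ^ p ^ l + C ε).degree < (p ^ m : ℕ) := by
    apply lt_of_le_of_lt (degree_add_le _ _)
    apply max_lt
    · apply lt_of_le_of_lt (degree_sum_le _ _)
      rw [Finset.sup_lt_iff (by exact WithBot.bot_lt_coe _)]
      intro l hl
      apply lt_of_le_of_lt (degree_C_mul_X_pow_le _ _)
      exact_mod_cast Nat.pow_lt_pow_right hp.one_lt (Finset.mem_range.1 hl)
    · apply lt_of_le_of_lt degree_C_le
      exact_mod_cast pow_pos hp.pos m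
  constructor
  · exact monic_X_pow_sub hd
  · rw [Qp, degree_sub_eq_left_of_degree_lt (by simpa using hd), degree_X_pow]

open Polynomial in
lemma Qp_root (m : ℕ) (e : ℕ → k) (ε : k) : ∃ s, s ^ p ^ m = ε + ∑ l ∈ Finset.range m, e l * s ^ p ^ l := by
  have hp := (Fact.out : p.Prime)
  obtain ⟨s, hs⟩ := IsAlgClosed.exists_root (Qp p m e ε) (by
    rw [(Qp_deg p m e ε).2]; exact_mod_cast (pow_pos hp.pos m).ne')
  refine ⟨s, ?_⟩
  simp only [Qp, IsRoot, eval_sub, eval_pow, eval_X, eval_add, eval_finsetSum, eval_mul, eval_C] at hs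
  rw [sub_eq_zero] at hs
  rw [hs, add_comm]

open Polynomial in
lemma Qp_root_ne (m : ℕ) (e : ℕ → k) (l₀ : ℕ) (hl : l₀ < m) (he : e l₀ ≠ 0) :
    ∃ s, s ≠ 0 ∧ s ^ p ^ m = ∑ l ∈ Finset.range m, e l * s ^ p ^ l := by
  have hp := (Fact.out : p.Prime)
  by_contra hcon
  push Not at hcon
  have hroots : ∀ s ∈ (Qp p m e 0).roots, s = 0 := by
    intro s hs
    by_contra h0
    have hs := isRoot_of_mem_roots hs
    simp only [Qp, IsRoot, eval_sub, eval_pow, eval_X, eval_add, eval_finsetSum, eval_mul, eval_C,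
      add_zero] at hs
    exact hcon s h0 (sub_eq_zero.1 hs)
  have hr := Multiset.eq_replicate_of_mem hroots
  have hprod := (IsAlgClosed.splits (Qp p m e 0)).eq_prod_roots_of_monic (Qp_deg p m e 0).1
  rw [hr] at hprod
  simp only [Multiset.map_replicate, C_0, sub_zero, Multiset.prod_replicate] at hprod
  have hdeg := (Qp_deg p m e 0).2
  rw [hprod, degree_X_pow] at hdeg
  have hdeg' : ((Qp p m e 0).roots.card) = p ^ m := by exact_mod_cast hdeg
  rw [hdeg'] at hprod
  have hc := congrArg (fun q => q.coeff (p ^ l₀)) hprod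
  have hne : p ^ l₀ ≠ p ^ m := (Nat.pow_lt_pow_right hp.one_lt hl).ne
  simp only [Qp, coeff_sub, coeff_X_pow, hne, if_false, map_zero, add_zero, finsetSum_coeff,
    coeff_C_mul, zero_sub, neg_eq_zero] at hc
  rw [Finset.sum_eq_single l₀] at hc
  · simp at hc; exact he hc
  · intro b _ hb
    have : p ^ l₀ ≠ p ^ b := fun h => hb (Nat.pow_right_injective hp.two_le h).symm
    simp [this]
  · intro h; exact absurd (Finset.mem_range.2 hl) h

variable [FiniteDimensional k Z]

lemma exists_dep (τ : k →+* k) (W : Z →ₛₗ[τ] Z) (z : Z) :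
    ∃ m, ∃ c : ℕ → k, W^[m] z = ∑ j ∈ Finset.range m, c j • W^[j] z := by
  let U : ℕ →o Submodule k Z := ⟨fun j => Submodule.span k ((fun i => W^[i] z) '' (Finset.range j)),
    fun a b h => Submodule.span_mono (Set.image_mono (by
      intro x; simp only [Finset.coe_range, Set.mem_Iio]; omega))⟩
  obtain ⟨n, hn⟩ := (monotone_stabilizes_iff_noetherian (R := k) (M := Z)).2 inferInstance U
  have h1 : W^[n] z ∈ U (n+1) := Submodule.subset_span ⟨n, by simp, rfl⟩
  rw [← hn (n+1) (by omega)] at h1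
  obtain ⟨c, hc⟩ := (Submodule.mem_span_image_finset_iff_exists_fun k).1 h1
  classical
  refine ⟨n, fun j => if h : j ∈ Finset.range n then c ⟨j, h⟩ else 0, ?_⟩
  rw [← hc]
  conv_rhs => rw [← Finset.sum_coe_sort]
  apply Finset.sum_congr rfl
  intro j _
  simp only [Finset.coe_mem, dif_pos]

lemma lang_surj (τ : k →+* k) (hτ : ∀ a, τ a ^ p = a) (W : Z →ₛₗ[τ] Z) (z : Z) :
    ∃ x, x = z + W x := by
  obtain ⟨m, c, hz⟩ := exists_dep τ W z
  obtain ⟨s, hs⟩ := Qp_root p m (fun l => (τ ^ (m - 1 - l)) (c l)) (1 : k)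
  have := krylov τ W c m z 1 (s ^ p ^ m) (map_one _) hz (by
    rw [Bseq_eq _ _ _ _ (map_one _)]
    refine Eq.trans ?_ hs.symm
    congr 1
    apply Finset.sum_congr rfl
    intro l hl
    rw [tau_pow p τ hτ s m l (Finset.mem_range.1 hl).le])
  rw [one_smul] at this
  exact ⟨_, this⟩

lemma lang_fix (τ : k →+* k) (hτ : ∀ a, τ a ^ p = a) (W : Z →ₛₗ[τ] Z) (hW : ∀ x, W x = 0 → x = 0)
    [Nontrivial Z] : ∃ x, x ≠ 0 ∧ W x = x := by
  classical
  obtain ⟨z, hz0⟩ := exists_ne (0 : Z)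
  have hex := exists_dep τ W z
  set m := Nat.find hex with hm
  obtain ⟨c, hz⟩ := Nat.find_spec hex
  have hW' : ∀ n, W^[n] z ≠ 0 := by
    intro n
    induction n with
    | zero => simpa
    | succ n ih => rw [Function.iterate_succ_apply']; exact fun h => ih (hW _ h)
  rw [← hm] at hz
  have hcne : ∃ l₀ < m, c l₀ ≠ 0 := by
    by_contra hcon
    push Not at hcon
    apply hW' m
    rw [hz]
    apply Finset.sum_eq_zero
    intro j hj
    rw [hcon j (Finset.mem_range.1 hj), zero_smul]
  obtain ⟨l₀, hl₀, hc₀⟩ := hcne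
  obtain ⟨s, hs0, hs⟩ := Qp_root_ne p m (fun l => (τ ^ (m - 1 - l)) (c l)) l₀ hl₀ (by
    exact (map_ne_zero _).2 hc₀)
  have ht : Bseq τ c 0 (s ^ p ^ m) m = s ^ p ^ m := by
    rw [Bseq_eq _ _ _ _ (map_zero _), zero_add]
    refine Eq.trans ?_ hs.symm
    apply Finset.sum_congr rfl
    intro l hl
    rw [tau_pow p τ hτ s m l (Finset.mem_range.1 hl).le]
  have := krylov τ W c m z 0 (s ^ p ^ m) (map_zero _) hz ht
  rw [zero_smul, zero_add] at this
  refine ⟨_, ?_, this.symm⟩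
  intro h0
  obtain ⟨m', hm'⟩ : ∃ m', m = m' + 1 := ⟨m - 1, by omega⟩
  rw [hm', Finset.sum_range_succ, ← hm', ht] at h0
  refine Nat.find_min hex (m := m') (by omega) ⟨fun j => - (s ^ p ^ m)⁻¹ * Bseq τ c 0 (s ^ p ^ m) (j+1), ?_⟩
  have h1 : W^[m'] z = (s ^ p ^ m)⁻¹ • (s ^ p ^ m) • W^[m'] z := by
    rw [smul_smul, inv_mul_cancel₀ (pow_ne_zero _ hs0), one_smul]
  rw [h1, eq_neg_of_add_eq_zero_right h0, smul_neg, Finset.smul_sum, ← Finset.sum_neg_distrib]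
  apply Finset.sum_congr rfl
  intro j _
  simp only [smul_smul, neg_mul, neg_smul]

/-- fixed vector outside a stable submodule -/
lemma lang_rel (τ : k →+* k) (hτ : ∀ a, τ a ^ p = a) (W : Z →ₛₗ[τ] Z) (Y : Submodule k Z)
    (h1 : ∀ x ∈ Y, W x ∈ Y) (h2 : ∀ x, W x ∈ Y → x ∈ Y) (hY : Y ≠ ⊤) :
    ∃ x, x ∉ Y ∧ W x = x := by
  have : Nontrivial (Z ⧸ Y) := Submodule.Quotient.nontrivial_iff.2 hY
  obtain ⟨q, hq0, hq⟩ := lang_fix p τ hτ (Y.mapQ Y W h1) (by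
    intro x hx
    obtain ⟨x, rfl⟩ := Submodule.Quotient.mk_surjective _ x
    rw [Submodule.mapQ_apply, Submodule.Quotient.mk_eq_zero] at hx
    rw [Submodule.Quotient.mk_eq_zero]
    exact h2 x hx)
  obtain ⟨x, rfl⟩ := Submodule.Quotient.mk_surjective _ q
  rw [Submodule.mapQ_apply, Submodule.Quotient.eq] at hq
  obtain ⟨y, hy⟩ := lang_surj p τ hτ (W.restrict h1) ⟨_, hq⟩
  have hy' : (y : Z) = (W x - x) + W y := by
    have := congrArg Subtype.val hy
    simpa using this
  refine ⟨x + y, ?_, ?_⟩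
  · intro h
    apply hq0
    rw [Submodule.Quotient.mk_eq_zero]
    simpa using Y.sub_mem h y.2
  · rw [map_add]; nth_rewrite 2 [hy']; abel

end lang

section blocks

variable {k : Type*} [Field k] {M : Type*} [AddCommGroup M] [Module k M] [FiniteDimensional k M]

lemma exists_sec (σ τ : k →+* k) (hστ : ∀ a, σ (τ a) = a) [RingHomSurjective σ]
    (F : M →ₛₗ[σ] M) (N : Submodule k M) :
    ∃ s : M →ₛₗ[τ] M, ∀ y ∈ Submodule.map F N, s y ∈ N ∧ F (s y) = y := by
  let b := Module.finBasis k N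
  let A : (Fin (finrank k N) → k) →ₗ[k] M := Fintype.linearCombination k (fun i => F (b i))
  obtain ⟨g0, hg0⟩ := LinearMap.exists_rightInverse_of_surjective A.rangeRestrict
    (LinearMap.range_rangeRestrict A)
  obtain ⟨g, hg⟩ := LinearMap.exists_extend g0
  refine ⟨{ toFun := fun y => ∑ i, τ (g y i) • (b i : M), map_add' := ?_, map_smul' := ?_ }, ?_⟩
  · intro x y; simp [add_smul, Finset.sum_add_distrib]
  · intro c x; simp [Finset.smul_sum, smul_smul]
  · intro y hy
    refine ⟨by
      change ∑ i, τ (g y i) • (b i : M) ∈ N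
      exact Submodule.sum_mem _ fun i _ => N.smul_mem _ (b i).2, ?_⟩
    have hyA : y ∈ LinearMap.range A := by
      obtain ⟨x, hx, rfl⟩ := hy
      refine ⟨fun i => σ (b.repr ⟨x, hx⟩ i), ?_⟩
      have := congrArg (fun z : N => F z) (b.sum_repr ⟨x, hx⟩)
      simp only at this
      simp only [A, Fintype.linearCombination_apply]
      rw [← this, Submodule.coe_sum, map_sum]
      simp
    have h1 : A (g y) = y := by
      have h2 : g y = g0 ⟨y, hyA⟩ := by rw [← hg]; rfl
      have h3 := congrArg Subtype.val (LinearMap.congr_fun hg0 ⟨y, hyA⟩)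
      rw [h2]; exact h3
    conv_rhs => rw [← h1]
    simp [A, Fintype.linearCombination_apply, hστ]

lemma exists_sec2 (σ τ : k →+* k) (hστ : ∀ a, σ (τ a) = a) [RingHomSurjective σ]
    (F : M →ₛₗ[σ] M) (lo hi : Submodule k M) (h : lo ≤ hi) :
    ∃ s : M →ₛₗ[τ] M, (∀ y ∈ Submodule.map F lo, s y ∈ lo) ∧
      ∀ y ∈ Submodule.map F hi, s y ∈ hi ∧ F (s y) = y := by
  obtain ⟨s1, h1⟩ := exists_sec σ τ hστ F lo
  obtain ⟨s2, h2⟩ := exists_sec σ τ hστ F hi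
  obtain ⟨g, hg⟩ := LinearMap.exists_extend (LinearMap.id : (Submodule.map F lo) →ₗ[k] _)
  let P : M →ₗ[k] M := (Submodule.map F lo).subtype ∘ₗ g
  have hP : ∀ y, P y ∈ Submodule.map F lo := fun y => (g y).2
  have hP' : ∀ y ∈ Submodule.map F lo, P y = y := fun y hy =>
    congrArg Subtype.val (LinearMap.congr_fun hg ⟨y, hy⟩)
  have hle : Submodule.map F lo ≤ Submodule.map F hi := Submodule.map_mono h
  refine ⟨s1.comp P + s2.comp (LinearMap.id - P), ?_, ?_⟩
  · intro y hy
    simp only [LinearMap.add_apply, LinearMap.comp_apply, LinearMap.sub_apply, LinearMap.id_apply,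
      hP' y hy, sub_self, map_zero, add_zero]
    exact (h1 y hy).1
  · intro y hy
    have ha := h1 _ (hP y)
    have hb := h2 (y - P y) (Submodule.sub_mem _ hy (hle (hP y)))
    simp only [LinearMap.add_apply, LinearMap.comp_apply, LinearMap.sub_apply, LinearMap.id_apply]
    refine ⟨Submodule.add_mem _ (h ha.1) hb.1, ?_⟩
    rw [map_add, ha.2, hb.2]; abel

lemma block_fix (p : ℕ) [Fact p.Prime] [IsAlgClosed k] (τ : k →+* k) (hτ : ∀ a, τ a ^ p = a)
    {ι : Type*} [Finite ι] (π : Equiv.Perm ι) (lo hi : ι → Submodule k M)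
    (hlt : ∀ i, lo i < hi i) (w : ι → (M →ₛₗ[τ] M))
    (hhi : ∀ i, ∀ y ∈ hi (π i), w i y ∈ hi i)
    (hlo : ∀ i, ∀ y ∈ lo (π i), w i y ∈ lo i)
    (hin : ∀ i, ∀ y ∈ hi (π i), w i y ∈ lo i → y ∈ lo (π i)) :
    ∃ x : ι → M, ∀ i, x i ∈ hi i ∧ x i ∉ lo i ∧ w i (x (π i)) = x i := by
  classical
  have key : ∀ i₀ : ι, ∃ x : ι → M, ∀ i, π.SameCycle i₀ i →
      x i ∈ hi i ∧ x i ∉ lo i ∧ w i (x (π i)) = x i := by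
    intro i₀
    let Z : Submodule k (ι → M) := 
      { carrier := {x | ∀ i, x i ∈ hi i ∧ (¬ π.SameCycle i₀ i → x i = 0)}
        add_mem' := fun {a b} ha hb i => ⟨(hi i).add_mem (ha i).1 (hb i).1, fun h => by
          simp [(ha i).2 h, (hb i).2 h]⟩
        zero_mem' := fun i => ⟨(hi i).zero_mem, fun _ => rfl⟩
        smul_mem' := fun c x hx i => ⟨(hi i).smul_mem c (hx i).1, fun h => by simp [(hx i).2 h]⟩ }
    let W : (ι → M) →ₛₗ[τ] (ι → M) :=
      { toFun := fun x i => w i (x (π i))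
        map_add' := fun x y => by ext i; simp
        map_smul' := fun c x => by ext i; simp }
    have hWZ : ∀ x ∈ Z, W x ∈ Z := by
      intro x hx i
      refine ⟨hhi i _ (hx (π i)).1, fun h => ?_⟩
      have h0 : x (π i) = 0 := (hx (π i)).2 (fun h' => h (Equiv.Perm.sameCycle_apply_right.1 h'))
      change w i (x (π i)) = 0
      rw [h0, map_zero]
    let Y0 : Submodule k (ι → M) := Submodule.pi Set.univ lo
    have hY0 : ∀ x, x ∈ Y0 ↔ ∀ i, x i ∈ lo i := fun x => by simp [Y0, Submodule.mem_pi]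
    let Y : Submodule k Z := Submodule.comap Z.subtype Y0
    obtain ⟨⟨x, hxZ⟩, hxY, hx⟩ := lang_rel p τ hτ (W.restrict hWZ) Y (by
        rintro ⟨x, hxZ⟩ hx
        have hx : x ∈ Y0 := hx
        change W x ∈ Y0
        rw [hY0] at hx ⊢
        exact fun i => hlo i _ (hx _)) (by
        rintro ⟨x, hxZ⟩ hx
        have hx : W x ∈ Y0 := hx
        change x ∈ Y0
        rw [hY0] at hx ⊢
        intro i
        obtain ⟨j, rfl⟩ := π.surjective i
        exact hin j _ (hxZ _).1 (hx j)) (by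
        intro htop
        obtain ⟨y, hy, hy'⟩ := SetLike.exists_of_lt (hlt i₀)
        have : (⟨Pi.single i₀ y, by
          intro i
          by_cases h : i = i₀
          · subst h; simp [hy, Equiv.Perm.SameCycle.refl]
          · simp [h]⟩ : Z) ∈ Y := by rw [htop]; trivial
        have h2 := (hY0 _).1 this i₀
        simp at h2
        exact hy' h2)
    have hx : ∀ i, w i (x (π i)) = x i := fun i => congrFun (congrArg Subtype.val hx) i
    have hxY : ¬ ∀ i, x i ∈ lo i := fun h => hxY ((hY0 x).2 h)
    push Not at hxY
    obtain ⟨i₁, hi₁⟩ := hxY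
    have hinv : ∀ i, x i ∈ lo i ↔ x (π i) ∈ lo (π i) := fun i =>
      ⟨fun h => hin i _ (hxZ _).1 (by rwa [hx]), fun h => by rw [← hx]; exact hlo i _ h⟩
    have hinvz : ∀ (n : ℤ) i, x i ∈ lo i ↔ x ((π ^ n) i) ∈ lo ((π ^ n) i) := by
      intro n
      induction n using Int.induction_on with
      | zero => simp
      | succ n ih => intro i; rw [ih, hinv, add_comm, zpow_one_add]; rfl
      | pred n ih =>
        intro i
        rw [ih, hinv ((π ^ (-(n:ℤ) - 1)) i)]
        rw [← Equiv.Perm.mul_apply, ← zpow_one_add]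
        simp
    have hsame : π.SameCycle i₀ i₁ := by
      by_contra h
      exact hi₁ (by rw [(hxZ i₁).2 h]; exact Submodule.zero_mem _)
    refine ⟨x, fun i h => ⟨(hxZ i).1, ?_, hx i⟩⟩
    obtain ⟨n, rfl⟩ := hsame.symm.trans h
    exact fun h' => hi₁ ((hinvz n _).2 h')
  choose X hX using key
  let r : ι → ι := fun i => (Quotient.mk (Equiv.Perm.SameCycle.setoid π) i).out
  have hr : ∀ i, π.SameCycle (r i) i := fun i =>
    Quotient.mk_out (s := Equiv.Perm.SameCycle.setoid π) i
  have hrπ : ∀ i, r (π i) = r i := fun i => by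
    have : Quotient.mk (Equiv.Perm.SameCycle.setoid π) (π i)
        = Quotient.mk (Equiv.Perm.SameCycle.setoid π) i :=
      Quotient.sound (Equiv.Perm.sameCycle_apply_left.2 (Equiv.Perm.SameCycle.refl _ _))
    simp only [r, this]
  refine ⟨fun i => X (r i) i, fun i => ?_⟩
  have := hX (r i) i (hr i)
  simp only [hrπ]
  exact this

lemma semilin_rank {σ : k →+* k} (hσ : Function.Bijective σ) [RingHomSurjective σ]
    (F : M →ₛₗ[σ] M) (N : Submodule k M) :
    finrank k (Submodule.map F N) + finrank k (N ⊓ LinearMap.ker F : Submodule k M) = finrank k N := by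
  obtain ⟨C, hC⟩ := Submodule.exists_isCompl (Submodule.comap N.subtype (LinearMap.ker F))
  have h1 := Submodule.finrank_add_eq_of_isCompl hC
  have h2 : finrank k (Submodule.comap N.subtype (LinearMap.ker F))
      = finrank k (N ⊓ LinearMap.ker F : Submodule k M) := by
    rw [← Submodule.map_comap_subtype]
    exact (Submodule.equivMapOfInjective N.subtype N.injective_subtype _).finrank_eq
  have h3 : finrank k C = finrank k (Submodule.map F N) := by
    let e : C → Submodule.map F N := fun c => ⟨F c, Submodule.mem_map_of_mem c.1.2⟩
    have he : Function.Bijective e := by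
      constructor
      · intro a b hab
        have hab : F a = F b := congrArg Subtype.val hab
        have h4 : (a : N) - b ∈ Submodule.comap N.subtype (LinearMap.ker F) := by
          simp [hab]
        have h5 := hC.disjoint.le_bot ⟨h4, C.sub_mem a.2 b.2⟩
        exact Subtype.ext (sub_eq_zero.1 ((Submodule.mem_bot k).1 h5))
      · rintro ⟨_, x, hx, rfl⟩
        have : (⟨x, hx⟩ : N) ∈ Submodule.comap N.subtype (LinearMap.ker F) ⊔ C := by
          rw [hC.codisjoint.eq_top]; trivial
        obtain ⟨u, hu, v, hv, huv⟩ := Submodule.mem_sup.1 this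
        refine ⟨⟨v, hv⟩, Subtype.ext ?_⟩
        have hu : F u = 0 := hu
        have h6 : (u : M) + v = x := congrArg Subtype.val huv
        change F v = F x
        rw [← h6, map_add, hu, zero_add]
    let j : C ≃+ Submodule.map F N :=
      { Equiv.ofBijective e he with map_add' := fun a b => Subtype.ext (by simp [e]) }
    have := rank_eq_of_equiv_equiv (R := k) (R' := k) σ j hσ (fun r m => Subtype.ext (by simp [j, e]))
    simp only [finrank, this]
  omega

lemma semilin_rank_comap {σ : k →+* k} (hσ : Function.Bijective σ) [RingHomSurjective σ]
    (V : M →ₛₗ[σ] M) (N : Submodule k M) :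
    finrank k (Submodule.comap V N) =
      finrank k (LinearMap.ker V) + finrank k (N ⊓ LinearMap.range V : Submodule k M) := by
  have := semilin_rank hσ V (Submodule.comap V N)
  rw [Submodule.map_comap_eq, inf_comm, inf_eq_right.2 (LinearMap.ker_le_comap V)] at this
  omega

end blocks

section comb

structure Comb (n : ℕ) (D : Finset ℕ) (f v : ℕ → ℕ) : Prop where
  zero : 0 ∈ D
  top : n ∈ D
  le : ∀ m ∈ D, m ≤ n
  f_mem : ∀ m ∈ D, f m ∈ D
  v_mem : ∀ m ∈ D, v m ∈ D
  f_mono : ∀ a ∈ D, ∀ b ∈ D, a ≤ b → f a ≤ f b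
  v_mono : ∀ a ∈ D, ∀ b ∈ D, a ≤ b → v a ≤ v b
  sum : ∀ m ∈ D, f m + v m = m + f n
  f0 : f 0 = 0

def IsBlk (D : Finset ℕ) (g a : ℕ) : Prop :=
  a ∈ D ∧ a + g ∈ D ∧ ∀ e ∈ D, ¬ (a < e ∧ e < a + g)

instance (D : Finset ℕ) (g : ℕ) : Finite {a // IsBlk D g a} :=
  Finite.of_injective (fun a : {a // IsBlk D g a} => (⟨a.1, a.2.1⟩ : D))
    (fun a b h => Subtype.ext (by simpa using h))

def Gaps (n : ℕ) (D : Finset ℕ) (g : ℕ) : Prop := ∀ a ∈ D, a < n → ∃ b ∈ D, a < b ∧ b ≤ a + g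

lemma pre_blk {n g : ℕ} {D : Finset ℕ} (h0 : 0 ∈ D) (hn : n ∈ D) (hle : ∀ m ∈ D, m ≤ n)
    (hgap : Gaps n D g) (h : ℕ → ℕ) (hmem : ∀ m ∈ D, h m ∈ D)
    (hlip : ∀ a ∈ D, ∀ b ∈ D, a ≤ b → h b ≤ h a + (b - a))
    (c : ℕ) (hc : IsBlk D g c) (h0c : h 0 ≤ c) (hnc : c < h n) :
    ∃ a, IsBlk D g a ∧ h a = c ∧ h (a + g) = c + g := by
  classical
  obtain ⟨a, ha, hmax⟩ := Finset.exists_max_image (D.filter (fun a => h a ≤ c)) id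
    ⟨0, by simp [h0, h0c]⟩
  simp only [Finset.mem_filter, id] at ha hmax
  have han : a < n := by
    rcases lt_or_eq_of_le (hle a ha.1) with h | h
    · exact h
    · subst h; omega
  have key : ∀ e ∈ D, a < e → c + g ≤ h e := by
    intro e he hae
    have h1 : c < h e := by
      by_contra hcon
      have := hmax e ⟨he, by omega⟩
      omega
    have := hc.2.2 _ (hmem e he)
    omega
  obtain ⟨b, hb, hab, hbg⟩ := hgap a ha.1 han
  have h1 := key b hb hab
  have h2 := hlip a ha.1 b hb hab.le
  have hb' : b = a + g := by omega
  subst hb'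
  refine ⟨a, ⟨ha.1, hb, ?_⟩, by omega, by omega⟩
  rintro e he ⟨h3, h4⟩
  have h5 := key e he h3
  have h6 := hlip a ha.1 e he h3.le
  omega

lemma comb_perm {n g : ℕ} {D : Finset ℕ} {f v : ℕ → ℕ} (H : Comb n D f v) (hg : 1 ≤ g)
    (hgap : Gaps n D g) : ∃ π : Equiv.Perm {a // IsBlk D g a}, ∀ a : {a // IsBlk D g a},
      (f a < f (a + g) → f a = π a ∧ f (a + g) = π a + g ∧ v (a + g) = v a) ∧
      (¬ f a < f (a + g) → v a = π a ∧ v (a + g) = π a + g ∧ f (a + g) = f a) := by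
  classical
  have hv0 : v 0 = f n := by have := H.sum 0 H.zero; have := H.f0; omega
  have hvn : v n = n := by have := H.sum n H.top; omega
  have hex : ∀ c : {a // IsBlk D g a}, ∃ a : {a // IsBlk D g a},
      (f a = c ∧ f (a + g) = c + g) ∨ (v a = c ∧ v (a + g) = c + g) := by
    rintro ⟨c, hc⟩
    by_cases hd : c < f n
    · obtain ⟨a, ha, h⟩ := pre_blk H.zero H.top H.le hgap f H.f_mem (fun a ha b hb hab => by
        have := H.sum a ha; have := H.sum b hb; have := H.v_mono a ha b hb hab; omega)
        c hc (by rw [H.f0]; omega) hd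
      exact ⟨⟨a, ha⟩, Or.inl h⟩
    · obtain ⟨a, ha, h⟩ := pre_blk H.zero H.top H.le hgap v H.v_mem (fun a ha b hb hab => by
        have := H.sum a ha; have := H.sum b hb; have := H.f_mono a ha b hb hab; omega)
        c hc (by rw [hv0]; omega) (by rw [hvn]; have := H.le _ hc.2.1; omega)
      exact ⟨⟨a, ha⟩, Or.inr h⟩
  choose ρ hρ using hex
  have hinj : Function.Injective ρ := by
    intro c c' h
    apply Subtype.ext
    have h1 := hρ c
    have h2 := hρ c'
    rw [← h] at h2
    have h3 := H.sum _ (ρ c).2.1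
    have h4 := H.sum _ (ρ c).2.2.1
    omega
  let e : Equiv.Perm {a // IsBlk D g a} := Equiv.ofBijective ρ (Finite.injective_iff_bijective.1 hinj)
  refine ⟨e.symm, fun a => ?_⟩
  obtain ⟨c, rfl⟩ := e.surjective a
  rw [Equiv.symm_apply_apply]
  have h1 := hρ c
  have h3 := H.sum _ (ρ c).2.1
  have h4 := H.sum _ (ρ c).2.2.1
  have h5 := H.f_mono _ (ρ c).2.1 _ (ρ c).2.2.1 (by omega)
  have h6 := H.v_mono _ (ρ c).2.1 _ (ρ c).2.2.1 (by omega)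
  change (f (ρ c) < f (ρ c + g) → f (ρ c) = c ∧ f (ρ c + g) = c + g ∧ v (ρ c + g) = v (ρ c)) ∧
      (¬ f (ρ c) < f (ρ c + g) → v (ρ c) = c ∧ v (ρ c + g) = c + g ∧ f (ρ c + g) = f (ρ c))
  omega

end comb

section flag

set_option linter.unusedSectionVars false

variable {k : Type*} [Field k] {M : Type*} [AddCommGroup M] [Module k M] [FiniteDimensional k M]
  {σ τ : k →+* k} [RingHomSurjective σ] [RingHomSurjective τ]

structure Flag (F : M →ₛₗ[σ] M) (V : M →ₛₗ[τ] M) (n : ℕ) (D : Finset ℕ) (f v : ℕ → ℕ)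
    (G : ℕ → Submodule k M) : Prop where
  zero : 0 ∈ D
  top : n ∈ D
  hn : n = finrank k M
  f_mem : ∀ m ∈ D, f m ∈ D
  v_mem : ∀ m ∈ D, v m ∈ D
  dim : ∀ m ∈ D, finrank k (G m) = m
  mono : ∀ a ∈ D, ∀ b ∈ D, a ≤ b → G a ≤ G b
  mapF : ∀ m ∈ D, Submodule.map F (G m) = G (f m)
  comapV : ∀ m ∈ D, Submodule.comap V (G m) = G (v m)

variable {F : M →ₛₗ[σ] M} {V : M →ₛₗ[τ] M} {n : ℕ} {D : Finset ℕ} {f v : ℕ → ℕ}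
    {G : ℕ → Submodule k M}

lemma Flag.comb (H : Flag F V n D f v G) (hσ : Function.Bijective σ) (hτ : Function.Bijective τ)
    (hFV : LinearMap.ker F = LinearMap.range V)
    (hVF : LinearMap.ker V = LinearMap.range F) : Comb n D f v := by
  have hf : ∀ m ∈ D, finrank k (Submodule.map F (G m)) = f m := fun m hm => by
    rw [H.mapF m hm, H.dim _ (H.f_mem m hm)]
  have hv : ∀ m ∈ D, finrank k (Submodule.comap V (G m)) = v m := fun m hm => by
    rw [H.comapV m hm, H.dim _ (H.v_mem m hm)]
  have htop : G n = ⊤ := Submodule.eq_top_of_finrank_eq (by rw [H.dim n H.top, H.hn])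
  refine ⟨H.zero, H.top, fun m hm => ?_, H.f_mem, H.v_mem, fun a ha b hb hab => ?_,
    fun a ha b hb hab => ?_, fun m hm => ?_, ?_⟩
  · rw [← H.dim m hm, H.hn]; exact Submodule.finrank_le _
  · rw [← hf a ha, ← hf b hb]
    exact Submodule.finrank_mono (Submodule.map_mono (H.mono a ha b hb hab))
  · rw [← hv a ha, ← hv b hb]
    exact Submodule.finrank_mono (Submodule.comap_mono (H.mono a ha b hb hab))
  · have h1 := semilin_rank hσ F (G m)
    have h2 := semilin_rank_comap hτ V (G m)
    have h3 := hf n H.top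
    rw [htop, Submodule.map_top] at h3
    rw [hVF, ← hFV, hv m hm] at h2
    rw [hf m hm, H.dim m hm] at h1
    omega
  · have h0 : G 0 = ⊥ := Submodule.finrank_eq_zero.1 (H.dim 0 H.zero)
    have := hf 0 H.zero
    rw [h0, Submodule.map_bot, finrank_bot] at this
    exact this.symm

lemma Flag.lt (H : Flag F V n D f v G) {a b : ℕ} (ha : a ∈ D) (hb : b ∈ D) (h : a < b) : G a < G b := by
  refine lt_of_le_of_ne (H.mono a ha b hb h.le) (fun h' => ?_)
  have h1 := H.dim a ha
  rw [h', H.dim b hb] at h1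
  omega

lemma Flag.vec (H : Flag F V n D f v G) (p : ℕ) [Fact p.Prime] [IsAlgClosed k]
    (hτp : ∀ a, τ a ^ p = a) (hστ : ∀ a, σ (τ a) = a) {g : ℕ} (hg : 1 ≤ g)
    (π : Equiv.Perm {a // IsBlk D g a}) (hπ : ∀ a : {a // IsBlk D g a},
      (f a < f (a + g) → f a = π a ∧ f (a + g) = π a + g ∧ v (a + g) = v a) ∧
      (¬ f a < f (a + g) → v a = π a ∧ v (a + g) = π a + g ∧ f (a + g) = f a)) :
    ∃ x : {a // IsBlk D g a} → M, ∀ a : {a // IsBlk D g a}, x a ∈ G (a + g) ∧ x a ∉ G a ∧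
      (f a < f (a + g) → F (x a) = x (π a)) ∧ (¬ f a < f (a + g) → V (x (π a)) = x a) := by
  classical
  have hs : ∀ a : {a // IsBlk D g a}, ∃ s : M →ₛₗ[τ] M, (∀ y ∈ Submodule.map F (G a), s y ∈ G a) ∧
      ∀ y ∈ Submodule.map F (G (a + g)), s y ∈ G (a + g) ∧ F (s y) = y := fun a =>
    exists_sec2 σ τ hστ F _ _ (H.mono a a.2.1 (a + g) a.2.2.1 (by omega))
  choose s hs1 hs2 using hs
  have hF1 : ∀ a : {a // IsBlk D g a}, f a < f (a + g) → Submodule.map F (G a) = G (π a) := fun a h => by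
    rw [H.mapF _ a.2.1, ((hπ a).1 h).1]
  have hF2 : ∀ a : {a // IsBlk D g a}, f a < f (a + g) →
      Submodule.map F (G (a + g)) = G (π a + g) := fun a h => by
    rw [H.mapF _ a.2.2.1, ((hπ a).1 h).2.1]
  have hV1 : ∀ a : {a // IsBlk D g a}, ¬ f a < f (a + g) → Submodule.comap V (G a) = G (π a) :=
    fun a h => by rw [H.comapV _ a.2.1, ((hπ a).2 h).1]
  have hV2 : ∀ a : {a // IsBlk D g a}, ¬ f a < f (a + g) →
      Submodule.comap V (G (a + g)) = G (π a + g) := fun a h => by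
    rw [H.comapV _ a.2.2.1, ((hπ a).2 h).2.1]
  obtain ⟨x, hx⟩ := block_fix p τ hτp π (fun a => G a) (fun a => G (a + g))
    (fun a => H.lt a.2.1 a.2.2.1 (by omega)) (fun a => if f a < f (a + g) then s a else V) (by
      intro a y hy
      by_cases h : f a < f (a + g)
      · simp only [h, if_true]
        exact (hs2 a y (by rwa [hF2 a h])).1
      · simp only [h, if_false]
        rw [← hV2 a h] at hy
        exact hy) (by
      intro a y hy
      by_cases h : f a < f (a + g)
      · simp only [h, if_true]
        exact hs1 a y (by rwa [hF1 a h])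
      · simp only [h, if_false]
        rw [← hV1 a h] at hy
        exact hy) (by
      intro a y hy hya
      by_cases h : f a < f (a + g)
      · simp only [h, if_true] at hya
        rw [← hF1 a h]
        exact ⟨_, hya, (hs2 a y (by rwa [hF2 a h])).2⟩
      · simp only [h, if_false] at hya
        rw [← hV1 a h]
        exact hya)
  refine ⟨x, fun a => ⟨(hx a).1, (hx a).2.1, fun h => ?_, fun h => ?_⟩⟩
  · have h1 := (hx a).2.2
    simp only [h, if_true] at h1
    rw [← h1]
    exact (hs2 a _ (by rw [hF2 a h]; exact (hx (π a)).1)).2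
  · have h1 := (hx a).2.2
    simp only [h, if_false] at h1
    exact h1

open Classical in
noncomputable def newD (D : Finset ℕ) (g : ℕ) : Finset ℕ :=
  D ∪ (D.filter (fun a => IsBlk D g a)).image (· + 1)

open Classical in
noncomputable def newf (D : Finset ℕ) (f : ℕ → ℕ) (g : ℕ) (m : ℕ) : ℕ :=
  if m ∈ D then f m else if f (m - 1) < f (m - 1 + g) then f (m - 1) + 1 else f (m - 1)

open Classical in
noncomputable def newv (D : Finset ℕ) (f v : ℕ → ℕ) (g : ℕ) (m : ℕ) : ℕ :=
  if m ∈ D then v m else if f (m - 1) < f (m - 1 + g) then v (m - 1) else v (m - 1) + 1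

lemma mem_newD {D : Finset ℕ} {g m : ℕ} : m ∈ newD D g ↔ m ∈ D ∨ ∃ a, IsBlk D g a ∧ m = a + 1 := by
  classical
  simp only [newD, Finset.mem_union, Finset.mem_image, Finset.mem_filter]
  constructor
  · rintro (h | ⟨a, ⟨_, h⟩, rfl⟩)
    · exact Or.inl h
    · exact Or.inr ⟨a, h, rfl⟩
  · rintro (h | ⟨a, h, rfl⟩)
    · exact Or.inl h
    · exact Or.inr ⟨a, ⟨h.1, h⟩, rfl⟩

lemma finrank_sup_span {N : Submodule k M} {x : M} (hx : x ∉ N) :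
    finrank k (N ⊔ Submodule.span k {x} : Submodule k M) = finrank k N + 1 := by
  have h1 : N < N ⊔ Submodule.span k {x} := by
    refine lt_of_le_of_ne le_sup_left (fun h => hx ?_)
    rw [h]
    exact le_sup_right (a := N) (Submodule.mem_span_singleton_self x)
  have h2 := Submodule.finrank_lt_finrank_of_lt h1
  have h3 := Submodule.finrank_add_le_finrank_add_finrank N (Submodule.span k {x})
  have h4 := finrank_span_singleton (K := k) (v := x) (fun h => hx (h ▸ N.zero_mem))
  omega

lemma Flag.refine (H : Flag F V n D f v G) (p : ℕ) [Fact p.Prime] [IsAlgClosed k]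
    (hσ : Function.Bijective σ) (hτ : Function.Bijective τ)
    (hFV : LinearMap.ker F = LinearMap.range V)
    (hVF : LinearMap.ker V = LinearMap.range F)
    (hτp : ∀ a, τ a ^ p = a) (hστ : ∀ a, σ (τ a) = a) (hτσ : ∀ a, τ (σ a) = a)
    {g : ℕ} (hg : 2 ≤ g) (hgap : Gaps n D g) :
    ∃ G', Flag F V n (newD D g) (newf D f g) (newv D f v g) G' := by
  classical
  obtain ⟨π, hπ⟩ := comb_perm (H.comb hσ hτ hFV hVF) (by omega) hgap
  obtain ⟨x, hx⟩ := H.vec p hτp hστ (by omega) π hπ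
  have hnD : ∀ a : {a // IsBlk D g a}, (a : ℕ) + 1 ∉ D := fun a h => a.2.2.2 _ h (by omega)
  let G' : ℕ → Submodule k M := fun m => if m ∈ D then G m else
    if h : IsBlk D g (m - 1) then G (m - 1) ⊔ Submodule.span k {x ⟨m - 1, h⟩} else ⊥
  have hG1 : ∀ m ∈ D, G' m = G m := fun m hm => by simp only [G', hm, if_true]
  have hG2 : ∀ a : {a // IsBlk D g a}, G' (a + 1) = G a ⊔ Submodule.span k {x a} := fun a => by
    have h1 := hnD a
    have h2 := a.2
    simp only [G', h1, if_false, Nat.add_sub_cancel, h2, dif_pos]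
  have hf1 : ∀ m ∈ D, newf D f g m = f m := fun m hm => by simp only [newf, hm, if_true]
  have hv1 : ∀ m ∈ D, newv D f v g m = v m := fun m hm => by simp only [newv, hm, if_true]
  have hf2 : ∀ a : {a // IsBlk D g a}, newf D f g (a + 1) =
      if f a < f (a + g) then f a + 1 else f a := fun a => by
    simp only [newf, hnD a, if_false, Nat.add_sub_cancel]
  have hv2 : ∀ a : {a // IsBlk D g a}, newv D f v g (a + 1) =
      if f a < f (a + g) then v a else v a + 1 := fun a => by
    simp only [newv, hnD a, if_false, Nat.add_sub_cancel]
  have hcase : ∀ m ∈ newD D g, m ∈ D ∨ ∃ a : {a // IsBlk D g a}, m = a + 1 := fun m hm => by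
    rcases mem_newD.1 hm with h | ⟨a, ha, h⟩
    · exact Or.inl h
    · exact Or.inr ⟨⟨a, ha⟩, h⟩
  have hsub : ∀ m ∈ D, m ∈ newD D g := fun m hm => mem_newD.2 (Or.inl hm)
  have hblk : ∀ a : {a // IsBlk D g a}, (a : ℕ) + 1 ∈ newD D g := fun a =>
    mem_newD.2 (Or.inr ⟨a, a.2, rfl⟩)
  have hlow : ∀ a : {a // IsBlk D g a}, G a ≤ G' (a + 1) := fun a => by
    rw [hG2]; exact le_sup_left
  have hhigh : ∀ a : {a // IsBlk D g a}, G' (a + 1) ≤ G (a + g) := fun a => by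
    rw [hG2]
    refine sup_le (H.mono _ a.2.1 _ a.2.2.1 (by omega)) ?_
    rw [Submodule.span_singleton_le_iff_mem]
    exact (hx a).1
  refine ⟨G', hsub _ H.zero, hsub _ H.top, H.hn, ?_, ?_, ?_, ?_, ?_, ?_⟩
  · intro m hm
    rcases hcase m hm with h | ⟨a, rfl⟩
    · rw [hf1 m h]; exact hsub _ (H.f_mem m h)
    · rw [hf2]
      split_ifs with h
      · rw [((hπ a).1 h).1]; exact hblk _
      · exact hsub _ (H.f_mem _ a.2.1)
  · intro m hm
    rcases hcase m hm with h | ⟨a, rfl⟩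
    · rw [hv1 m h]; exact hsub _ (H.v_mem m h)
    · rw [hv2]
      split_ifs with h
      · exact hsub _ (H.v_mem _ a.2.1)
      · rw [((hπ a).2 h).1]; exact hblk _
  · intro m hm
    rcases hcase m hm with h | ⟨a, rfl⟩
    · rw [hG1 m h]; exact H.dim m h
    · rw [hG2, finrank_sup_span (hx a).2.1, H.dim _ a.2.1]
  · intro m hm m' hm' hmm
    rcases hcase m hm with h | ⟨a, rfl⟩ <;> rcases hcase m' hm' with h' | ⟨b, rfl⟩
    · rw [hG1 m h, hG1 m' h']; exact H.mono m h m' h' hmm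
    · rw [hG1 m h]
      have : m ≠ b + 1 := fun e => hnD b (e ▸ h)
      exact le_trans (H.mono m h b b.2.1 (by omega)) (hlow b)
    · rw [hG1 m' h']
      have := a.2.2.2 m' h'
      exact le_trans (hhigh a) (H.mono _ a.2.2.1 _ h' (by omega))
    · rcases eq_or_lt_of_le hmm with h | h
      · rw [h]
      · have := a.2.2.2 b b.2.1
        exact le_trans (le_trans (hhigh a) (H.mono _ a.2.2.1 _ b.2.1 (by omega))) (hlow b)
  · intro m hm
    rcases hcase m hm with h | ⟨a, rfl⟩
    · rw [hG1 m h, hf1 m h, hG1 _ (H.f_mem m h)]; exact H.mapF m h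
    · rw [hf2]
      split_ifs with h
      · rw [((hπ a).1 h).1, hG2, hG2, Submodule.map_sup, Submodule.map_span, Set.image_singleton,
          (hx a).2.2.1 h, H.mapF _ a.2.1, ((hπ a).1 h).1]
      · rw [hG1 _ (H.f_mem _ a.2.1)]
        apply le_antisymm
        · refine le_trans (Submodule.map_mono (hhigh a)) ?_
          rw [H.mapF _ a.2.2.1, ((hπ a).2 h).2.2]
        · refine le_trans ?_ (Submodule.map_mono (hlow a))
          rw [H.mapF _ a.2.1]
  · intro m hm
    rcases hcase m hm with h | ⟨a, rfl⟩
    · rw [hG1 m h, hv1 m h, hG1 _ (H.v_mem m h)]; exact H.comapV m h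
    · rw [hv2]
      split_ifs with h
      · rw [hG1 _ (H.v_mem _ a.2.1)]
        apply le_antisymm
        · refine le_trans (Submodule.comap_mono (hhigh a)) ?_
          rw [H.comapV _ a.2.2.1, ((hπ a).1 h).2.2]
        · refine le_trans ?_ (Submodule.comap_mono (hlow a))
          rw [H.comapV _ a.2.1]
      · rw [((hπ a).2 h).1, hG2, hG2]
        have hV1 : Submodule.comap V (G a) = G (π a) := by rw [H.comapV _ a.2.1, ((hπ a).2 h).1]
        have hVx := (hx a).2.2.2 h
        apply le_antisymm
        · intro y hy
          obtain ⟨z, hz, u, hu, hzu⟩ := Submodule.mem_sup.1 (Submodule.mem_comap.1 hy)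
          obtain ⟨c, rfl⟩ := Submodule.mem_span_singleton.1 hu
          refine Submodule.mem_sup.2 ⟨y - σ c • x (π a), ?_, σ c • x (π a),
            Submodule.mem_span_singleton.2 ⟨_, rfl⟩, by abel⟩
          rw [← hV1, Submodule.mem_comap, map_sub, LinearMap.map_smulₛₗ, hτσ, hVx, ← hzu]
          simpa using hz
        · refine sup_le ?_ ?_
          · rw [← hV1]; exact Submodule.comap_mono le_sup_left
          · rw [Submodule.span_singleton_le_iff_mem, Submodule.mem_comap, hVx]
            exact le_sup_right (a := G a) (Submodule.mem_span_singleton_self _)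

end flag

section main

variable {k : Type*} [Field k] {M : Type*} [AddCommGroup M] [Module k M] [FiniteDimensional k M]
  {M' : Type*} [AddCommGroup M'] [Module k M'] [FiniteDimensional k M']
  {σ τ : k →+* k} [RingHomSurjective σ] [RingHomSurjective τ]
  {F : M →ₛₗ[σ] M} {V : M →ₛₗ[τ] M} {F' : M' →ₛₗ[σ] M'} {V' : M' →ₛₗ[τ] M'}
  {n : ℕ}

lemma full_of_gaps {D : Finset ℕ} (h0 : 0 ∈ D) (hgap : Gaps n D 1) : ∀ m ≤ n, m ∈ D := by
  intro m
  induction m with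
  | zero => intro _; exact h0
  | succ m ih =>
    intro h
    obtain ⟨b, hb, h1, h2⟩ := hgap m (ih (by omega)) (by omega)
    rwa [show m + 1 = b by omega]

lemma Flag.basis {D : Finset ℕ} {f v : ℕ → ℕ} {G : ℕ → Submodule k M}
    (H : Flag F V n D f v G) (hle : ∀ m ∈ D, m ≤ n) (hgap : Gaps n D 1)
    (x : {a // IsBlk D 1 a} → M) (hx : ∀ a : {a // IsBlk D 1 a}, x a ∈ G (a + 1) ∧ x a ∉ G a) :
    ∃ b : Basis {a // IsBlk D 1 a} k M, ∀ a, b a = x a := by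
  have hfull := full_of_gaps H.zero hgap
  have hblk : ∀ a, IsBlk D 1 a ↔ a < n := fun a =>
    ⟨fun h => by have := hle _ h.2.1; omega, fun h => ⟨hfull a (by omega), hfull (a+1) (by omega),
      fun e _ => by omega⟩⟩
  have hspan : ∀ m ≤ n, G m ≤ Submodule.span k (Set.range x) := by
    intro m
    induction m with
    | zero =>
      intro _
      rw [Submodule.finrank_eq_zero.1 (H.dim 0 H.zero)]
      exact bot_le
    | succ m ih =>
      intro hm
      have hb := (hblk m).2 (by omega)
      have h1 : G m ⊔ Submodule.span k {x ⟨m, hb⟩} = G (m + 1) := by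
        apply Submodule.eq_of_le_of_finrank_le
        · refine sup_le (H.mono _ hb.1 _ hb.2.1 (by omega)) ?_
          rw [Submodule.span_singleton_le_iff_mem]
          exact (hx ⟨m, hb⟩).1
        · rw [finrank_sup_span (hx ⟨m, hb⟩).2, H.dim _ hb.1, H.dim _ hb.2.1]
      rw [← h1]
      refine sup_le (ih (by omega)) ?_
      rw [Submodule.span_singleton_le_iff_mem]
      exact Submodule.subset_span ⟨_, rfl⟩
  have htop : G n = ⊤ := Submodule.eq_top_of_finrank_eq (by rw [H.dim n H.top, H.hn])
  let _ : Fintype {a // IsBlk D 1 a} := Fintype.ofFinite _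
  have hcard : Fintype.card {a // IsBlk D 1 a} = finrank k M := by
    rw [← H.hn, ← Fintype.card_fin n]
    exact Fintype.card_congr ((Equiv.subtypeEquivRight hblk).trans Fin.equivSubtype.symm)
  refine ⟨basisOfTopLeSpanOfCardEqFinrank x (by rw [← htop]; exact hspan n le_rfl) hcard, ?_⟩
  intro a
  simp

lemma final_iso {D : Finset ℕ} {f v : ℕ → ℕ} {G : ℕ → Submodule k M} {G' : ℕ → Submodule k M'}
    (H : Flag F V n D f v G) (H' : Flag F' V' n D f v G') (p : ℕ) [Fact p.Prime] [IsAlgClosed k]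
    (hσ : Function.Bijective σ) (hτ : Function.Bijective τ)
    (hFV : LinearMap.ker F = LinearMap.range V) (hVF : LinearMap.ker V = LinearMap.range F)
    (hFV' : LinearMap.ker F' = LinearMap.range V') (hVF' : LinearMap.ker V' = LinearMap.range F')
    (hτp : ∀ a, τ a ^ p = a) (hστ : ∀ a, σ (τ a) = a) (hgap : Gaps n D 1) :
    ∃ α : M ≃ₗ[k] M', (∀ x, α (F x) = F' (α x)) ∧ ∀ x, α (V x) = V' (α x) := by
  have hC := H.comb hσ hτ hFV hVF
  obtain ⟨π, hπ⟩ := comb_perm hC le_rfl hgap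
  obtain ⟨x, hx⟩ := H.vec p hτp hστ le_rfl π hπ
  obtain ⟨x', hx'⟩ := H'.vec p hτp hστ le_rfl π hπ
  obtain ⟨b, hb⟩ := H.basis hC.le hgap x (fun a => ⟨(hx a).1, (hx a).2.1⟩)
  obtain ⟨b', hb'⟩ := H'.basis hC.le hgap x' (fun a => ⟨(hx' a).1, (hx' a).2.1⟩)
  have e1 : ∀ y, F (V y) = 0 := fun y => by
    rw [← LinearMap.mem_ker, hFV]; exact ⟨y, rfl⟩
  have e2 : ∀ y, V (F y) = 0 := fun y => by
    rw [← LinearMap.mem_ker, hVF]; exact ⟨y, rfl⟩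
  have e1' : ∀ y, F' (V' y) = 0 := fun y => by
    rw [← LinearMap.mem_ker, hFV']; exact ⟨y, rfl⟩
  have e2' : ∀ y, V' (F' y) = 0 := fun y => by
    rw [← LinearMap.mem_ker, hVF']; exact ⟨y, rfl⟩
  let α : M ≃ₗ[k] M' := b.equiv b' (Equiv.refl _)
  have hα : ∀ a, α (x a) = x' a := fun a => by
    rw [← hb, ← hb']; simp [α]
  have hF : (α : M →ₗ[k] M').comp F = F'.comp (α : M →ₗ[k] M') := by
    apply b.ext
    intro a
    change α (F (b a)) = F' (α (b a))
    rw [hb, hα]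
    by_cases h : f a < f (a + 1)
    · rw [(hx a).2.2.1 h, (hx' a).2.2.1 h, hα]
    · rw [← (hx a).2.2.2 h, ← (hx' a).2.2.2 h, e1, e1', map_zero]
  have hV : (α : M →ₗ[k] M').comp V = V'.comp (α : M →ₗ[k] M') := by
    apply b.ext
    intro c
    obtain ⟨a, rfl⟩ := π.surjective c
    change α (V (b (π a))) = V' (α (b (π a)))
    rw [hb, hα]
    by_cases h : f a < f (a + 1)
    · rw [← (hx a).2.2.1 h, ← (hx' a).2.2.1 h, e2, e2', map_zero]
    · rw [(hx a).2.2.2 h, (hx' a).2.2.2 h, hα]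
  exact ⟨α, fun y => LinearMap.congr_fun hF y, fun y => LinearMap.congr_fun hV y⟩

lemma loop_iso (p : ℕ) [Fact p.Prime] [IsAlgClosed k]
    (hσ : Function.Bijective σ) (hτ : Function.Bijective τ)
    (hFV : LinearMap.ker F = LinearMap.range V) (hVF : LinearMap.ker V = LinearMap.range F)
    (hFV' : LinearMap.ker F' = LinearMap.range V') (hVF' : LinearMap.ker V' = LinearMap.range F')
    (hτp : ∀ a, τ a ^ p = a) (hστ : ∀ a, σ (τ a) = a) (hτσ : ∀ a, τ (σ a) = a) (N : ℕ) :
    ∀ (D : Finset ℕ) (f v : ℕ → ℕ) (G : ℕ → Submodule k M) (G' : ℕ → Submodule k M')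
    (_ : Flag F V n D f v G) (_ : Flag F' V' n D f v G') (_ : n + 1 ≤ D.card + N),
    ∃ α : M ≃ₗ[k] M', (∀ x, α (F x) = F' (α x)) ∧ ∀ x, α (V x) = V' (α x) := by
  classical
  induction N with
  | zero =>
    intro D f v G G' H H' hN
    have hC := H.comb hσ hτ hFV hVF
    have hD : D = Finset.range (n + 1) := by
      apply Finset.eq_of_subset_of_card_le
      · intro m hm; have := hC.le m hm; simp; omega
      · simpa using hN
    apply final_iso H H' p hσ hτ hFV hVF hFV' hVF' hτp hστ
    intro a _ han
    exact ⟨a + 1, by rw [hD]; simp; omega, by omega, le_rfl⟩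
  | succ N ih =>
    intro D f v G G' H H' hN
    by_cases hg1 : Gaps n D 1
    · exact final_iso H H' p hσ hτ hFV hVF hFV' hVF' hτp hστ hg1
    have hex : ∃ g, Gaps n D g := ⟨n, fun a _ h => ⟨n, H.top, h, by omega⟩⟩
    obtain ⟨g, hg, hmin⟩ : ∃ g, Gaps n D g ∧ ∀ g' < g, ¬ Gaps n D g' :=
      ⟨Nat.find hex, Nat.find_spec hex, fun g' h => Nat.find_min hex h⟩
    have hmon : ∀ g ≤ 1, ¬ Gaps n D g := fun g hle h => hg1 (fun a ha han => by
      obtain ⟨b, hb, h1, h2⟩ := h a ha han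
      exact ⟨b, hb, h1, by omega⟩)
    have hg2 : 2 ≤ g := by
      by_contra h
      exact hmon g (by omega) hg
    obtain ⟨G1, H1⟩ := H.refine p hσ hτ hFV hVF hτp hστ hτσ hg2 hg
    obtain ⟨G1', H1'⟩ := H'.refine p hσ hτ hFV' hVF' hτp hστ hτσ hg2 hg
    refine ih _ _ _ _ _ H1 H1' ?_
    have hlt : D ⊂ newD D g := by
      have h1 := hmin (g - 1) (by omega)
      unfold Gaps at h1
      push Not at h1
      obtain ⟨a, ha, han, h2⟩ := h1
      obtain ⟨b, hb, h3, h4⟩ := hg a ha han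
      have h5 := h2 b hb h3
      have hblk : IsBlk D g a := ⟨ha, by rwa [show a + g = b by omega], fun e he h => by
        have := h2 e he h.1; omega⟩
      refine Finset.ssubset_iff_of_subset (fun m hm => mem_newD.2 (Or.inl hm)) |>.2
        ⟨a + 1, mem_newD.2 (Or.inr ⟨a, hblk, rfl⟩), fun h => hblk.2.2 _ h (by omega)⟩
    have := Finset.card_lt_card hlt
    omega

/-- the subspace of a word; `none` stands for `0` -/
def wsub (F : M →ₛₗ[σ] M) (V : M →ₛₗ[τ] M) : Option (List Bool) → Submodule k M
  | none => ⊥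
  | some w => w.foldl (fun (N : Submodule k M) (b : Bool) =>
            if b then Submodule.map F N else Submodule.comap V N) ⊤

def opF : Option (List Bool) → Option (List Bool)
  | none => none
  | some w => some (w ++ [true])

def opV : Option (List Bool) → Option (List Bool)
  | none => some [true]
  | some w => some (w ++ [false])

lemma wsub_opF (o) : wsub F V (opF o) = Submodule.map F (wsub F V o) := by
  cases o <;> simp [wsub, opF, List.foldl_append]

lemma wsub_opV (hVF : LinearMap.ker V = LinearMap.range F) (o) :
    wsub F V (opV o) = Submodule.comap V (wsub F V o) := by
  cases o
  · simp only [wsub, opV, List.foldl_cons, List.foldl_nil, if_true]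
    rw [Submodule.map_top, ← hVF, LinearMap.ker]
  · simp [wsub, opV, List.foldl_append]

lemma wsub_chain_aux (hVF : LinearMap.ker V = LinearMap.range F) (w : List Bool) : ∀ w' : List Bool,
    wsub F V (some w) ≤ wsub F V (some w') ∨ wsub F V (some w') ≤ wsub F V (some w) := by
  have hmid : ∀ A B : Submodule k M, Submodule.map F A ≤ Submodule.comap V B := fun A B => by
    refine le_trans LinearMap.map_le_range ?_
    rw [← hVF]
    exact LinearMap.ker_le_comap V
  have hT : ∀ w, wsub F V (some (w ++ [true])) = Submodule.map F (wsub F V (some w)) :=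
    fun w => wsub_opF (some w)
  have hB : ∀ w, wsub F V (some (w ++ [false])) = Submodule.comap V (wsub F V (some w)) :=
    fun w => wsub_opV hVF (some w)
  induction w using List.reverseRecOn with
  | nil => intro w'; right; exact le_top
  | append_singleton w b ih =>
    intro w'
    induction w' using List.reverseRecOn with
    | nil => left; exact le_top
    | append_singleton w' b' _ =>
      cases b <;> cases b'
      · rw [hB, hB]
        exact (ih w').imp (fun h => Submodule.comap_mono h) (fun h => Submodule.comap_mono h)
      · rw [hB, hT]; right; exact hmid _ _
      · rw [hB, hT]; left; exact hmid _ _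
      · rw [hT, hT]
        exact (ih w').imp (fun h => Submodule.map_mono h) (fun h => Submodule.map_mono h)

lemma wsub_chain (hVF : LinearMap.ker V = LinearMap.range F) (o o' : Option (List Bool)) :
    wsub F V o ≤ wsub F V o' ∨ wsub F V o' ≤ wsub F V o := by
  cases o with
  | none => left; exact bot_le
  | some w => cases o' with
    | none => right; exact bot_le
    | some w' => exact wsub_chain_aux hVF w w'

lemma wsub_le (hVF : LinearMap.ker V = LinearMap.range F) (o o' : Option (List Bool))
    (h : finrank k (wsub F V o) ≤ finrank k (wsub F V o')) : wsub F V o ≤ wsub F V o' := by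
  rcases wsub_chain hVF o o' with h1 | h1
  · exact h1
  · exact (Submodule.eq_of_le_of_finrank_le h1 h).ge

lemma init_flag (hVF : LinearMap.ker V = LinearMap.range F) (δ : Option (List Bool) → ℕ)
    (hδ : ∀ o, finrank k (wsub F V o) = δ o) (hn : n = finrank k M) (D : Finset ℕ)
    (wd : ℕ → Option (List Bool)) (hD : ∀ o, δ o ∈ D) (hwd : ∀ m ∈ D, δ (wd m) = m) :
    Flag F V n D (fun m => δ (opF (wd m))) (fun m => δ (opV (wd m))) (fun m => wsub F V (wd m)) := by
  refine ⟨?_, ?_, hn, fun m _ => hD _, fun m _ => hD _, fun m hm => ?_, fun a ha b hb hab => ?_,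
    fun m hm => ?_, fun m hm => ?_⟩
  · have := hD none
    rwa [← hδ, wsub, finrank_bot] at this
  · have := hD (some [])
    rw [← hδ] at this
    have h2 : finrank k (wsub F V (some [])) = finrank k M := finrank_top k M
    rw [h2] at this
    first | exact this | (rw [hn]; exact this) | (rw [← hn]; exact this)
  · rw [hδ, hwd m hm]
  · apply wsub_le hVF
    rw [hδ, hδ, hwd a ha, hwd b hb]; exact hab
  · rw [← wsub_opF]
    apply le_antisymm <;> apply wsub_le hVF <;> simp only [hδ] <;> rw [hwd _ (hD _)]
  · rw [← wsub_opV hVF]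
    apply le_antisymm <;> apply wsub_le hVF <;> simp only [hδ] <;> rw [hwd _ (hD _)]

lemma iso_of_dims (p : ℕ) [Fact p.Prime] [IsAlgClosed k]
    (hσ : Function.Bijective σ) (hτ : Function.Bijective τ)
    (hFV : LinearMap.ker F = LinearMap.range V) (hVF : LinearMap.ker V = LinearMap.range F)
    (hFV' : LinearMap.ker F' = LinearMap.range V') (hVF' : LinearMap.ker V' = LinearMap.range F')
    (hτp : ∀ a, τ a ^ p = a) (hστ : ∀ a, σ (τ a) = a) (hτσ : ∀ a, τ (σ a) = a)
    (h : ∀ w : List Bool, finrank k (wsub F V (some w)) = finrank k (wsub F' V' (some w))) :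
    ∃ α : M ≃ₗ[k] M', (∀ x, α (F x) = F' (α x)) ∧ ∀ x, α (V x) = V' (α x) := by
  classical
  let δ : Option (List Bool) → ℕ := fun o => finrank k (wsub F V o)
  have hδ' : ∀ o, finrank k (wsub F' V' o) = δ o := by
    intro o
    cases o with
    | none =>
      change finrank k (⊥ : Submodule k M') = finrank k (⊥ : Submodule k M)
      rw [finrank_bot, finrank_bot]
    | some w => exact (h w).symm
  have hn' : finrank k M = finrank k M' := by
    have := h []
    exact ((finrank_top k M).symm.trans this).trans (finrank_top k M')
  let D : Finset ℕ := (Finset.range (finrank k M + 1)).filter (fun m => ∃ o, δ o = m)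
  have hD : ∀ o, δ o ∈ D := fun o => by
    simp only [D, Finset.mem_filter, Finset.mem_range]
    exact ⟨Nat.lt_succ_of_le (Submodule.finrank_le _), o, rfl⟩
  have hex : ∀ m, ∃ o, m ∈ D → δ o = m := fun m => by
    by_cases hm : m ∈ D
    · obtain ⟨o, ho⟩ := (Finset.mem_filter.1 hm).2
      exact ⟨o, fun _ => ho⟩
    · exact ⟨none, fun h => absurd h hm⟩
  choose wd hwd using hex
  exact loop_iso p hσ hτ hFV hVF hFV' hVF' hτp hστ hτσ (finrank k M + 1) D _ _ _ _
    (init_flag hVF δ (fun _ => rfl) rfl D wd hD hwd)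
    (init_flag hVF' δ hδ' hn' D wd hD hwd) (by omega)

lemma wsub_map (α : M ≃ₗ[k] M') (hF : ∀ x, α (F x) = F' (α x)) (hV : ∀ x, α (V x) = V' (α x))
    (w : List Bool) :
    Submodule.map (α : M →ₗ[k] M') (wsub F V (some w)) = wsub F' V' (some w) := by
  induction w using List.reverseRecOn with
  | nil => simp [wsub]
  | append_singleton w b ih =>
    simp only [wsub] at ih
    simp only [wsub, List.foldl_append, List.foldl_cons, List.foldl_nil]
    rw [← ih]
    cases b
    · simp only [Bool.false_eq_true, if_false]
      ext y
      simp only [Submodule.mem_map, Submodule.mem_comap]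
      constructor
      · rintro ⟨x, hx, rfl⟩
        exact ⟨_, hx, hV x⟩
      · rintro ⟨z, hz, hzy⟩
        refine ⟨α.symm y, ?_, by simp⟩
        have : V (α.symm y) = z := by
          apply α.injective
          rw [hV, α.apply_symm_apply]; exact hzy.symm
        rwa [this]
    · simp only [if_true]
      ext y
      simp only [Submodule.mem_map]
      constructor
      · rintro ⟨_, ⟨x, hx, rfl⟩, rfl⟩
        exact ⟨_, ⟨x, hx, rfl⟩, (hF x).symm⟩
      · rintro ⟨_, ⟨x, hx, rfl⟩, rfl⟩
        exact ⟨_, ⟨x, hx, rfl⟩, hF x⟩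

end main

end Kraft

/-- (Kraft.)  Let `k` be an algebraically closed field of characteristic `p`, and let
`(M, F, V)` and `(M', F', V')` be two Dieudonné spaces of BT₁ group schemes over `k`.
They are isomorphic — i.e., there is a `k`-linear bijection `α : M → M'` with
`α ∘ F = F' ∘ α` and `α ∘ V = V' ∘ α` — if and only if for every finite word `w` in the two
subspace operations `N ↦ F(N)` and `N ↦ V⁻¹(N)`, the subspaces obtained by applying `w` to
`M` and to `M'` (using `F, V` and `F', V'` respectively) have the same dimension.
(A word is encoded as a `List Bool`, `true` standing for the image operation `N ↦ F(N)` and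
`false` for the preimage operation `N ↦ V⁻¹(N)`.) -/
theorem kraft_classification (p : ℕ) [Fact p.Prime] (k : Type*) [Field k] [CharP k p]
    [PerfectRing k p] [IsAlgClosed k]
    (M : Type*) [AddCommGroup M] [Module k M] [FiniteDimensional k M]
    (M' : Type*) [AddCommGroup M'] [Module k M'] [FiniteDimensional k M']
    (F : M →ₛₗ[frobenius k p] M)
    (V : M →ₛₗ[((frobeniusEquiv k p).symm : k →+* k)] M)
    (hFV : LinearMap.ker F = LinearMap.range V)
    (hVF : LinearMap.ker V = LinearMap.range F)
    (F' : M' →ₛₗ[frobenius k p] M')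
    (V' : M' →ₛₗ[((frobeniusEquiv k p).symm : k →+* k)] M')
    (hFV' : LinearMap.ker F' = LinearMap.range V')
    (hVF' : LinearMap.ker V' = LinearMap.range F') :
    (∃ α : M ≃ₗ[k] M', (∀ x, α (F x) = F' (α x)) ∧ ∀ x, α (V x) = V' (α x)) ↔
      ∀ w : List Bool,
        finrank k ((w.foldl
          (fun (N : Submodule k M) (b : Bool) =>
            if b then Submodule.map F N else Submodule.comap V N) ⊤ : Submodule k M))
        = finrank k ((w.foldl
          (fun (N : Submodule k M') (b : Bool) =>
            if b then Submodule.map F' N else Submodule.comap V' N) ⊤ : Submodule k M')) := by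

  constructor
  · rintro ⟨α, hF, hV⟩ w
    have h := Kraft.wsub_map α hF hV w
    have h2 := (α.submoduleMap (Kraft.wsub F V (some w))).finrank_eq
    exact h2.trans (congrArg (fun N : Submodule k M' => finrank k N) h)
  · intro h
    exact Kraft.iso_of_dims p (σ := frobenius k p) (τ := ((frobeniusEquiv k p).symm : k →+* k))
      (frobeniusEquiv k p).bijective (frobeniusEquiv k p).symm.bijective hFV hVF hFV' hVF'
      (fun a => (frobeniusEquiv k p).apply_symm_apply a)
      (fun a => (frobeniusEquiv k p).apply_symm_apply a)
      (fun a => (frobeniusEquiv k p).symm_apply_apply a) h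
end
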